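/- Existence of recovery sequences (discrete form of Proposition 3.11 of the paper, for continuously differentiable limits): assume Assumption H and Assumption A:2T. There exists a set Ω₁ ∈ ℱ with ℙ(Ω₁) = 1 such that for every ω ∈ Ω₁, every open axis-parallel box A ⊂ ℝ^d and every function u : ℝ^d → ℝⁿ that is continuously differentiable on a neighbourhood of the closure of A, there exists a family (u_ε)_{ε>0} of functions u_ε : εℤ^d → ℝⁿ with lim_{ε↓0} ε^d Σ_{z∈εℤ^d∩A} |u_ε(z) − u(z)|^{pβ/(β+1)} = 0 and lim_{ε↓0} E_ε(ω;u_ε,A) = ∫_A W₀(Du(x)) dx, where Du(x) ∈ ℝ^{n×d} denotes the Jacobian matrix of u at x. -/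

import Mathlib

/-!
The energy of `u` is first bounded from above by tiling. Around every point `u` is nearly affine
with some slope `F`, and a nearly optimal value of a cell problem for `F` can be realized on all
translated cells simultaneously: choosing the best of the `kᵈ` offsets of the tiling, the total
energy is an average of one observable along the orbit of `ω`, which the pointwise ergodic theorem
evaluates. To apply it on a single event of full measure, slopes and correctors are restricted to
countable dense sets and the error is absorbed by replacing each potential by its supremum over
small balls. The local bounds on small boxes are glued together to `∫ W₀(Du)`.

No matching lower bound is needed to turn the inequality into an equality. Moving the value at one
site with a coercive edge increases the energy continuously to infinity, and the move that lifts it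
to the required limit is negligible after averaging.
-/

open MeasureTheory Filter Metric Set
open scoped Classical
open scoped ENNReal Topology Pointwise

noncomputable section

namespace StochHom

/-- `ℝ^d` with the Euclidean norm. -/
abbrev Rd (d : ℕ) : Type := EuclideanSpace ℝ (Fin d)

/-- `ℝ^n` with the Euclidean norm. -/
abbrev Rn (n : ℕ) : Type := EuclideanSpace ℝ (Fin n)

/-- The lattice `ℤ^d`. -/
abbrev Zd (d : ℕ) : Type := Fin d → ℤ

variable {d n : ℕ}

/-- The embedding of the lattice `ℤ^d` into `ℝ^d`. -/
def toRd (z : Zd d) : Rd d := (EuclideanSpace.equiv (Fin d) ℝ).symm fun i => (z i : ℝ)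

/-- The standard basis vectors `eᵢ` of `ℤ^d`. -/
def stdb (i : Fin d) : Zd d := fun j => if j = i then 1 else 0

/-- The interaction range `R = max {4√d, max_{b ∈ ℰ₀} |b|}`. -/
def irange (d : ℕ) (E0 : Finset (Zd d)) : ℝ :=
  max (4 * Real.sqrt d) (sSup ((fun b : Zd d => ‖toRd b‖) '' (E0 : Set (Zd d))))

variable {Ω : Type*} [MeasurableSpace Ω]

/-- The energy `E₁(ω; u, ℤ^d ∩ A)`. -/
def energy1 (τ : Zd d → Ω → Ω) (E0 : Finset (Zd d)) (V : Zd d → Ω → Rn n → ℝ)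
    (ω : Ω) (u : Zd d → Rn n) (A : Set (Rd d)) : ℝ :=
  ∑' z : Zd d, if toRd z ∈ A then
      ∑ b ∈ E0, V b (τ z ω) ((‖toRd b‖)⁻¹ • (u (z + b) - u z)) else 0

/-- The scaled energy `E_ε(ω; u, A)`, where a function `u : εℤ^d → ℝ^n` is identified with a
function on `ℤ^d` via `z ↦ u(εz)`, so that `∂_b^ε u (z) = (u (z+b) - u z)/(ε |b|)`. -/
def energyE (τ : Zd d → Ω → Ω) (E0 : Finset (Zd d)) (V : Zd d → Ω → Rn n → ℝ)
    (ε : ℝ) (ω : Ω) (u : Zd d → Rn n) (A : Set (Rd d)) : ℝ :=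
  ε ^ d * ∑' z : Zd d, if ε • toRd z ∈ A then
      ∑ b ∈ E0, V b (τ z ω) ((ε * ‖toRd b‖)⁻¹ • (u (z + b) - u z)) else 0

/-- The localized minimal energy `m_F(ω; A)`. -/
def mF (τ : Zd d → Ω → Ω) (E0 : Finset (Zd d)) (V : Zd d → Ω → Rn n → ℝ)
    (ω : Ω) (F : Rd d →L[ℝ] Rn n) (A : Set (Rd d)) : ℝ :=
  ⨅ φ : {φ : Zd d → Rn n // ∀ z : Zd d, infDist (toRd z) Aᶜ ≤ irange d E0 → φ z = 0},
    energy1 τ E0 V ω (fun z => F (toRd z) + φ.1 z) A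

/-- The half-open cube `[0,k)^d ⊂ ℝ^d`. -/
def cube (d k : ℕ) : Set (Rd d) := {x | ∀ i, 0 ≤ x i ∧ x i < (k : ℝ)}

/-- The homogenized energy density `W₀(F) = inf_{k ≥ 1} k⁻ᵈ E[m_F(·, [0,k)^d)]`. -/
def W0 (P : Measure Ω) (τ : Zd d → Ω → Ω) (E0 : Finset (Zd d))
    (V : Zd d → Ω → Rn n → ℝ) (F : Rd d →L[ℝ] Rn n) : ℝ :=
  ⨅ k : {k : ℕ // 0 < k}, (((k : ℕ) : ℝ) ^ d)⁻¹ * ∫ ω, mF τ E0 V ω F (cube d k) ∂P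

/-- Half-open axis-parallel box `Π_i [aᵢ, bᵢ)`. -/
def halfBox (a b : Fin d → ℝ) : Set (Rd d) := {x | ∀ i, a i ≤ x i ∧ x i < b i}

/-- Open axis-parallel box `Π_i (aᵢ, bᵢ)`. -/
def openBox (a b : Fin d → ℝ) : Set (Rd d) := {x | ∀ i, a i < x i ∧ x i < b i}

/-- Closed axis-parallel box `Π_i [aᵢ, bᵢ]`. -/
def closedBox (a b : Fin d → ℝ) : Set (Rd d) := {x | ∀ i, a i ≤ x i ∧ x i ≤ b i}

/-- Half-open axis-parallel box with integer corners. -/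
def intBox (a b : Zd d) : Set (Rd d) := {x | ∀ i, (a i : ℝ) ≤ x i ∧ x i < (b i : ℝ)}

/-- The periodic cell minimization `W^{(k)}(ω; F)`. -/
def Wper (τ : Zd d → Ω → Ω) (E0 : Finset (Zd d)) (V : Zd d → Ω → Rn n → ℝ)
    (k : ℕ) (ω : Ω) (F : Rd d →L[ℝ] Rn n) : ℝ :=
  ⨅ φ : {φ : Zd d → Rn n // ∀ z z' : Zd d, φ (z + k • z') = φ z},
    ((k : ℝ) ^ d)⁻¹ * energy1 τ E0 V ω (fun z => F (toRd z) + φ.1 z) (cube d k)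

section Maximal

/-- The ball of radius `N` around `z` in `ℤ^d` for the maximum norm. -/
def latticeBall (z : Zd d) (N : ℕ) : Finset (Zd d) :=
  Finset.Icc (fun i => z i - N) (fun i => z i + N)

lemma mem_latticeBall {z y : Zd d} {N : ℕ} : y ∈ latticeBall z N ↔ ∀ i, |y i - z i| ≤ N := by
  simp only [latticeBall, Finset.mem_Icc, Pi.le_def, ← forall_and, abs_sub_le_iff]
  exact forall_congr' fun i => by omega

lemma coe_latticeBall (z : Zd d) (N : ℕ) :
    (latticeBall z N : Set (Zd d)) = closedBall z (N : ℝ) := by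
  ext y
  rw [Finset.mem_coe, mem_latticeBall, mem_closedBall, dist_pi_le_iff N.cast_nonneg]
  refine forall_congr' fun i => ?_
  rw [Int.dist_eq]
  exact_mod_cast Iff.rfl

lemma card_latticeBall (z : Zd d) (N : ℕ) : (latticeBall z N).card = (2 * N + 1) ^ d := by
  have h (i : Fin d) : (z i + N + 1 - (z i - N)).toNat = 2 * N + 1 := by omega
  simp [latticeBall, Pi.card_Icc, h]

lemma sum_latticeBall_zero_add (a : Zd d → ℝ) (z : Zd d) (N : ℕ) :
    ∑ y ∈ latticeBall 0 N, a (y + z) = ∑ y ∈ latticeBall z N, a y :=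
  Finset.sum_equiv (Equiv.addRight z) (fun y => by simp [mem_latticeBall]) fun _ _ => rfl

lemma exists_pairwiseDisjoint_latticeBall (S : Finset (Zd d)) (r : Zd d → ℕ)
    (hr : ∀ z ∈ S, 1 ≤ r z) :
    ∃ T ⊆ S, ((T : Set (Zd d)).PairwiseDisjoint fun z => latticeBall z (r z)) ∧
      (S.card : ℝ) ≤ 9 ^ d * ∑ z ∈ T, (r z : ℝ) ^ d := by
  obtain ⟨T, hTS, hdisj, hcover⟩ :=
    Vitali.exists_disjoint_subfamily_covering_enlargement_closedBall (S : Set (Zd d)) id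
      (fun z => (r z : ℝ)) (∑ z ∈ S, (r z : ℝ))
      (fun z hz => Finset.single_le_sum (fun z _ => Nat.cast_nonneg (r z)) hz) 4 (by norm_num)
  lift T to Finset (Zd d) using S.finite_toSet.subset hTS
  rw [Finset.coe_subset] at hTS
  have hcover' : S ⊆ T.biUnion fun z => latticeBall z (4 * r z) := by
    intro z hz
    obtain ⟨y, hy, hzy⟩ := hcover z hz
    have hmem : z ∈ (latticeBall y (4 * r y) : Set (Zd d)) := by
      rw [coe_latticeBall]
      simpa using hzy (mem_closedBall_self (r z).cast_nonneg)
    exact Finset.mem_biUnion.2 ⟨y, hy, hmem⟩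
  have hcard : S.card ≤ ∑ z ∈ T, (9 * r z) ^ d := by
    refine (Finset.card_le_card hcover').trans (Finset.card_biUnion_le.trans ?_)
    refine Finset.sum_le_sum fun z hz => (card_latticeBall z _).trans_le ?_
    have := hr z (hTS hz)
    exact Nat.pow_le_pow_left (by omega) d
  refine ⟨T, hTS, fun z hz y hy hzy => ?_, ?_⟩
  · rw [Function.onFun, ← Finset.disjoint_coe, coe_latticeBall, coe_latticeBall]
    exact hdisj hz hy hzy
  · rw [Finset.mul_sum]
    exact_mod_cast hcard.trans_eq (by simp [mul_pow])

lemma mul_card_le_of_lt_sum_latticeBall {a : Zd d → ℝ} (ha : 0 ≤ a) {t : ℝ} (ht : 0 ≤ t)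
    {S B : Finset (Zd d)} {r : Zd d → ℕ} (hr : ∀ z ∈ S, 1 ≤ r z)
    (hB : ∀ z ∈ S, latticeBall z (r z) ⊆ B)
    (hlt : ∀ z ∈ S, t * (r z : ℝ) ^ d < ∑ y ∈ latticeBall z (r z), a y) :
    t * S.card ≤ 9 ^ d * ∑ z ∈ B, a z := by
  obtain ⟨T, hTS, hdisj, hcard⟩ := exists_pairwiseDisjoint_latticeBall S r hr
  calc t * S.card ≤ t * (9 ^ d * ∑ z ∈ T, (r z : ℝ) ^ d) := by gcongr
    _ = 9 ^ d * ∑ z ∈ T, t * (r z : ℝ) ^ d := by rw [← Finset.mul_sum]; ring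
    _ ≤ 9 ^ d * ∑ z ∈ T, ∑ y ∈ latticeBall z (r z), a y := by
        gcongr with z hz
        exact (hlt z (hTS hz)).le
    _ = 9 ^ d * ∑ y ∈ T.biUnion fun z => latticeBall z (r z), a y := by
        rw [Finset.sum_biUnion hdisj]
    _ ≤ 9 ^ d * ∑ z ∈ B, a z := by
        gcongr
        · exact fun z _ _ => ha z
        · exact Finset.biUnion_subset.2 fun z hz => hB z (hTS hz)

/-- A measure-preserving action `τ` of `ℤ^d` on the measure space `(Ω, P)`. -/
structure IsMeasurePreservingAction (P : Measure Ω) (τ : Zd d → Ω → Ω) : Prop where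
  zero : τ 0 = id
  add : ∀ x y, τ (x + y) = τ x ∘ τ y
  measurePreserving : ∀ z, MeasurePreserving (τ z) P P

namespace IsMeasurePreservingAction

variable {P : Measure Ω} {τ : Zd d → Ω → Ω}

lemma add_apply (hτ : IsMeasurePreservingAction P τ) (x y : Zd d) (ω : Ω) :
    τ (x + y) ω = τ x (τ y ω) :=
  congrFun (hτ.add x y) ω

lemma integrable_comp (hτ : IsMeasurePreservingAction P τ) {f : Ω → ℝ} (hf : Integrable f P)
    (z : Zd d) : Integrable (fun ω => f (τ z ω)) P :=
  (hτ.measurePreserving z).integrable_comp_of_integrable hf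

lemma integral_comp (hτ : IsMeasurePreservingAction P τ) {f : Ω → ℝ} (hf : Integrable f P)
    (z : Zd d) : ∫ ω, f (τ z ω) ∂P = ∫ ω, f ω ∂P := by
  have hmap := (hτ.measurePreserving z).map_eq
  rw [← integral_map (hτ.measurePreserving z).aemeasurable (by rw [hmap]; exact hf.1), hmap]

lemma ae_forall_comp (hτ : IsMeasurePreservingAction P τ) {p : Ω → Prop} (h : ∀ᵐ ω ∂P, p ω) :
    ∀ᵐ ω ∂P, ∀ z, p (τ z ω) :=
  ae_all_iff.2 fun z => (hτ.measurePreserving z).quasiMeasurePreserving.ae h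

lemma card_mul_integral_le (hτ : IsMeasurePreservingAction P τ) {f g : Ω → ℝ}
    (hf : Integrable f P) (hg : Integrable g P) {A B : Finset (Zd d)}
    (h : ∀ ω, ∑ z ∈ A, f (τ z ω) ≤ ∑ z ∈ B, g (τ z ω)) :
    A.card * ∫ ω, f ω ∂P ≤ B.card * ∫ ω, g ω ∂P := by
  have hsum {f : Ω → ℝ} (hf : Integrable f P) (A : Finset (Zd d)) :
      A.card * ∫ ω, f ω ∂P = ∫ ω, ∑ z ∈ A, f (τ z ω) ∂P := by
    rw [integral_finsetSum _ fun z _ => hτ.integrable_comp hf z]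
    simp [hτ.integral_comp hf]
  rw [hsum hf, hsum hg]
  exact integral_mono (integrable_finsetSum _ fun z _ => hτ.integrable_comp hf z)
    (integrable_finsetSum _ fun z _ => hτ.integrable_comp hg z) h

end IsMeasurePreservingAction

variable {P : Measure Ω} {τ : Zd d → Ω → Ω}

/-- The points `ω` where an average of `f` along the orbit of `ω`, over a ball of radius
between `1` and `K`, is large; averages are normalized by `N ^ d`. -/
def maximalSet (τ : Zd d → Ω → Ω) (f : Ω → ℝ) (t : ℝ) (K : ℕ) : Set Ω :=
  {ω | ∃ N ∈ Finset.Icc 1 K, t * (N : ℝ) ^ d < ∑ z ∈ latticeBall 0 N, f (τ z ω)}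

lemma measurableSet_maximalSet (hτ : ∀ z, Measurable (τ z)) {f : Ω → ℝ} (hf : Measurable f)
    (t : ℝ) (K : ℕ) : MeasurableSet (maximalSet τ f t K) := by
  simp only [maximalSet, Set.ofPred_exists, ofPred_and]
  refine .iUnion fun N => .inter (.const _) (measurableSet_lt measurable_const ?_)
  exact Finset.measurable_sum _ fun z _ => hf.comp (hτ z)

lemma IsMeasurePreservingAction.sum_indicator_maximalSet_le (hτ : IsMeasurePreservingAction P τ)
    {f : Ω → ℝ} (hf : 0 ≤ f) {t : ℝ} (ht : 0 ≤ t) (K : ℕ) (ω : Ω) :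
    ∑ z ∈ latticeBall 0 K, (maximalSet τ f t K).indicator (fun _ => t) (τ z ω) ≤
      ∑ z ∈ latticeBall 0 (2 * K), 9 ^ d * f (τ z ω) := by
  set S := (latticeBall 0 K).filter fun z => τ z ω ∈ maximalSet τ f t K with hS
  have hmax : ∀ z ∈ S, ∃ N : ℕ, (1 ≤ N ∧ N ≤ K) ∧
      t * (N : ℝ) ^ d < ∑ y ∈ latticeBall z N, f (τ y ω) := by
    intro z hz
    obtain ⟨N, hN, hlt⟩ := (Finset.mem_filter.1 hz).2
    refine ⟨N, Finset.mem_Icc.1 hN, ?_⟩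
    rwa [← sum_latticeBall_zero_add (fun y => f (τ y ω)), Finset.sum_congr rfl fun y _ => by
      rw [hτ.add_apply]]
  choose! r hr hlt using hmax
  have hsub : ∀ z ∈ S, latticeBall z (r z) ⊆ latticeBall 0 (2 * K) := by
    intro z hz y hy
    have hzK := mem_latticeBall.1 (Finset.mem_filter.1 hz).1
    simp only [mem_latticeBall, Pi.zero_apply, sub_zero, abs_le] at hy hzK ⊢
    intro i
    have := hy i; have := hzK i; have := (hr z hz).2
    push_cast
    omega
  calc ∑ z ∈ latticeBall 0 K, (maximalSet τ f t K).indicator (fun _ => t) (τ z ω)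
      = t * S.card := by simp [Set.indicator_apply, Finset.sum_ite, hS, mul_comm]
    _ ≤ 9 ^ d * ∑ z ∈ latticeBall 0 (2 * K), f (τ z ω) :=
        mul_card_le_of_lt_sum_latticeBall (fun z => hf (τ z ω)) ht (fun z hz => (hr z hz).1)
          hsub hlt
    _ = _ := Finset.mul_sum ..

lemma IsMeasurePreservingAction.measureReal_maximalSet_le [IsFiniteMeasure P]
    (hτ : IsMeasurePreservingAction P τ) {f : Ω → ℝ} (hfm : Measurable f) (hfi : Integrable f P)
    (hf : 0 ≤ f) {t : ℝ} (ht : 0 < t) (K : ℕ) :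
    P.real (maximalSet τ f t K) ≤ 18 ^ d * (∫ ω, f ω ∂P) / t := by
  have hA : MeasurableSet (maximalSet τ f t K) :=
    measurableSet_maximalSet (fun z => (hτ.measurePreserving z).measurable) hfm t K
  have h := hτ.card_mul_integral_le ((integrable_const t).indicator hA) (hfi.const_mul (9 ^ d))
    (hτ.sum_indicator_maximalSet_le hf ht.le K)
  rw [integral_indicator_const _ hA, integral_const_mul, card_latticeBall, card_latticeBall,
    smul_eq_mul] at h
  push_cast at h
  have hint : 0 ≤ ∫ ω, f ω ∂P := integral_nonneg hf
  rw [le_div_iff₀ ht]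
  refine le_of_mul_le_mul_left ?_ (show (0 : ℝ) < (2 * K + 1) ^ d by positivity)
  calc (2 * K + 1 : ℝ) ^ d * (P.real (maximalSet τ f t K) * t)
      ≤ (2 * (2 * K) + 1) ^ d * (9 ^ d * ∫ ω, f ω ∂P) := h
    _ ≤ (2 * (2 * K + 1)) ^ d * (9 ^ d * ∫ ω, f ω ∂P) := by gcongr; linarith
    _ = (2 * K + 1 : ℝ) ^ d * (18 ^ d * ∫ ω, f ω ∂P) := by
        rw [show (18 : ℝ) = 2 * 9 by norm_num, mul_pow, mul_pow]; ring

theorem IsMeasurePreservingAction.measure_exists_lt_sum_norm_le [IsFiniteMeasure P]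
    (hτ : IsMeasurePreservingAction P τ) {f : Ω → ℝ} (hf : Integrable f P) {t : ℝ} (ht : 0 < t) :
    P {ω | ∃ N : ℕ, 1 ≤ N ∧ t * (N : ℝ) ^ d < ∑ z ∈ latticeBall 0 N, |f (τ z ω)|} ≤
      ENNReal.ofReal (18 ^ d * (∫ ω, |f ω| ∂P) / t) := by
  set g : Ω → ℝ := fun ω => |hf.1.mk f ω|
  have hfg : (fun ω => |f ω|) =ᵐ[P] g := hf.1.ae_eq_mk.mono fun ω h => by simp only [g, h]
  have hgm : Measurable g := hf.1.stronglyMeasurable_mk.measurable.abs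
  have hunion : {ω | ∃ N : ℕ, 1 ≤ N ∧ t * (N : ℝ) ^ d < ∑ z ∈ latticeBall 0 N, |f (τ z ω)|}
      =ᵐ[P] ⋃ K, maximalSet τ g t K := by
    refine eventuallyEq_set.2 ?_
    filter_upwards [hτ.ae_forall_comp hfg] with ω h
    simp only [mem_ofPred_eq, mem_iUnion, maximalSet, h, Finset.mem_Icc]
    exact ⟨fun ⟨N, hN, hlt⟩ => ⟨N, N, ⟨hN, le_rfl⟩, hlt⟩, fun ⟨_, N, hN, hlt⟩ => ⟨N, hN.1, hlt⟩⟩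
  have hmono : Monotone (maximalSet τ g t) := fun _ _ h _ ⟨N, hN, hlt⟩ =>
    ⟨N, Finset.Icc_subset_Icc_right h hN, hlt⟩
  rw [measure_congr hunion, hmono.measure_iUnion, integral_congr_ae hfg]
  refine iSup_le fun K => ?_
  rw [← ofReal_measureReal]
  exact ENNReal.ofReal_le_ofReal (hτ.measureReal_maximalSet_le hgm (hf.abs.congr hfg)
    (fun _ => abs_nonneg _) ht K)

end Maximal

section SpatialMean

/-- The lattice points `z` for which `ε z` lies in the half-open box `∏ᵢ (lᵢ, uᵢ]`. -/
def latticeBox (ε : ℝ) (l u : Fin d → ℝ) : Finset (Zd d) :=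
  Fintype.piFinset fun i => Finset.Ioc ⌊l i / ε⌋ ⌊u i / ε⌋

lemma mem_latticeBox {ε : ℝ} (hε : 0 < ε) {l u : Fin d → ℝ} {z : Zd d} :
    z ∈ latticeBox ε l u ↔ ∀ i, l i < ε * z i ∧ ε * z i ≤ u i := by
  simp only [latticeBox, Fintype.mem_piFinset, Finset.mem_Ioc, Int.floor_lt, Int.le_floor,
    div_lt_iff₀ hε, le_div_iff₀ hε, mul_comm]

lemma tendsto_mul_floor_div (x : ℝ) :
    Tendsto (fun ε : ℝ => ε * (⌊x / ε⌋ : ℝ)) (𝓝[>] 0) (𝓝 x) := by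
  have hlim : Tendsto (fun ε : ℝ => x - ε) (𝓝[>] 0) (𝓝 x) := by
    simpa using (tendsto_const_nhds (x := x)).sub
      ((tendsto_id (x := 𝓝 (0 : ℝ))).mono_left nhdsWithin_le_nhds)
  refine tendsto_of_tendsto_of_tendsto_of_le_of_le' hlim tendsto_const_nhds ?_ ?_ <;>
    filter_upwards [self_mem_nhdsWithin] with ε (hε : 0 < ε)
  · have := mul_le_mul_of_nonneg_left (Int.sub_one_lt_floor (x / ε)).le hε.le
    rwa [mul_sub, mul_div_cancel₀ _ hε.ne', mul_one] at this
  · simpa [mul_div_cancel₀ _ hε.ne'] using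
      mul_le_mul_of_nonneg_left (Int.floor_le (x / ε)) hε.le

lemma tendsto_card_latticeBox {l u : Fin d → ℝ} (h : ∀ i, l i ≤ u i) :
    Tendsto (fun ε : ℝ => ε ^ d * ((latticeBox ε l u).card : ℝ)) (𝓝[>] 0)
      (𝓝 (∏ i, (u i - l i))) := by
  have hlim : Tendsto (fun ε : ℝ => ∏ i, (ε * (⌊u i / ε⌋ : ℝ) - ε * (⌊l i / ε⌋ : ℝ))) (𝓝[>] 0)
      (𝓝 (∏ i, (u i - l i))) :=
    tendsto_finsetProd _ fun i _ => (tendsto_mul_floor_div _).sub (tendsto_mul_floor_div _)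
  refine hlim.congr' ?_
  filter_upwards [self_mem_nhdsWithin] with ε (hε : 0 < ε)
  have hfloor (i : Fin d) : ⌊l i / ε⌋ ≤ ⌊u i / ε⌋ := by gcongr; exact h i
  have hcast (i : Fin d) :
      ((⌊u i / ε⌋ - ⌊l i / ε⌋).toNat : ℝ) = (⌊u i / ε⌋ : ℝ) - ⌊l i / ε⌋ := by
    exact_mod_cast Int.toNat_of_nonneg (sub_nonneg.2 (hfloor i))
  simp [latticeBox, hcast, ← mul_sub, Finset.prod_mul_distrib]

lemma eventually_mul_le (c : ℝ) {γ : ℝ} (hγ : 0 < γ) : ∀ᶠ ε in 𝓝[>] (0 : ℝ), ε * c ≤ γ := by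
  have hlim : Tendsto (fun ε : ℝ => ε * c) (𝓝[>] 0) (𝓝 0) := by
    simpa using ((tendsto_id (x := 𝓝 (0 : ℝ))).mono_left nhdsWithin_le_nhds).mul_const c
  exact hlim.eventually_le_const hγ

lemma exists_shrink_prod_lt {l u : Fin d → ℝ} (h : ∀ i, l i < u i) {η : ℝ} (hη : 0 < η) :
    ∃ γ : ℝ, 0 < γ ∧ (∀ i, l i + γ < u i - γ) ∧
      ∏ i, (u i - l i) < (∏ i, ((u i - γ) - (l i + γ))) + η := by
  have hprod : Continuous fun γ : ℝ => (∏ i, ((u i - γ) - (l i + γ))) + η := by fun_prop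
  have hlt : ∀ᶠ γ in 𝓝 (0 : ℝ), ∏ i, (u i - l i) < (∏ i, ((u i - γ) - (l i + γ))) + η :=
    (hprod.tendsto 0).eventually_const_lt (by simpa using hη)
  have hside : ∀ᶠ γ in 𝓝 (0 : ℝ), ∀ i, l i + γ < u i - γ := eventually_all.2 fun i =>
    (continuous_const.add continuous_id).continuousAt.eventually_lt
      (continuous_const.sub continuous_id).continuousAt (by simpa using h i)
  obtain ⟨γ, ⟨h₁, h₂⟩, hγ⟩ :=
    (((hside.and hlt).filter_mono nhdsWithin_le_nhds).and self_mem_nhdsWithin).exists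
      (f := 𝓝[>] (0 : ℝ))
  exact ⟨γ, hγ, h₁, h₂⟩

lemma add_mem_latticeBox_of_mem_shrink {ε γ : ℝ} (hε : 0 < ε) {l u : Fin d → ℝ} {y : Zd d}
    (hy : ∀ i, ε * |(y i : ℝ)| ≤ γ) {z : Zd d}
    (hz : z ∈ latticeBox ε (fun i => l i + γ) (fun i => u i - γ)) : z + y ∈ latticeBox ε l u := by
  rw [mem_latticeBox hε] at hz ⊢
  intro i
  have hbound : |ε * (y i : ℝ)| ≤ γ := by rw [abs_mul, abs_of_pos hε]; exact hy i
  rw [abs_le] at hbound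
  have := hz i
  simp only [Pi.add_apply, Int.cast_add, mul_add]
  constructor <;> linarith

lemma latticeBox_subset_latticeBall {ε E : ℝ} (hε : 0 < ε) {l u : Fin d → ℝ}
    (hE : ∀ i, |l i| + |u i| ≤ E) : latticeBox ε l u ⊆ latticeBall 0 ⌈E / ε⌉₊ := by
  intro z hz
  rw [mem_latticeBox hε] at hz
  rw [mem_latticeBall]
  intro i
  have hzE : |ε * (z i : ℝ)| ≤ E := by
    have := hE i; have := hz i
    refine abs_le.2 ⟨?_, ?_⟩
    · linarith [neg_abs_le (l i), abs_nonneg (u i)]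
    · linarith [le_abs_self (u i), abs_nonneg (l i)]
  rw [abs_mul, abs_of_pos hε, mul_comm, ← le_div_iff₀ hε] at hzE
  rw [Pi.zero_apply, sub_zero]
  exact_mod_cast hzE.trans (Nat.le_ceil _)

lemma exists_sum_latticeBox_le (l u : Fin d → ℝ) :
    ∃ D : ℝ, 0 < D ∧ ∀ (a : Zd d → ℝ) (t : ℝ), 0 ≤ a → 0 ≤ t →
      (∀ N : ℕ, 1 ≤ N → ∑ z ∈ latticeBall 0 N, a z ≤ t * (N : ℝ) ^ d) →
      ∀ ε ∈ Ioc (0 : ℝ) 1, ε ^ d * ∑ z ∈ latticeBox ε l u, a z ≤ D * t := by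
  set E : ℝ := 1 + ∑ i, (|l i| + |u i|)
  have hE0 : 0 < E := by positivity
  have hE (i : Fin d) : |l i| + |u i| ≤ E :=
    (Finset.single_le_sum (f := fun i => |l i| + |u i|) (fun _ _ => by positivity)
      (Finset.mem_univ i)).trans (by simp [E])
  refine ⟨(E + 1) ^ d, by positivity, fun a t ha ht hN ε ⟨hε, hε1⟩ => ?_⟩
  set N := ⌈E / ε⌉₊
  have hεN : ε * N ≤ E + 1 := by
    have := mul_le_mul_of_nonneg_left (Nat.ceil_lt_add_one (div_pos hE0 hε).le).le hε.le
    rw [mul_add, mul_div_cancel₀ _ hε.ne'] at this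
    linarith
  calc ε ^ d * ∑ z ∈ latticeBox ε l u, a z ≤ ε ^ d * ∑ z ∈ latticeBall 0 N, a z := by
        gcongr
        · exact fun z _ _ => ha z
        · exact latticeBox_subset_latticeBall hε hE
    _ ≤ ε ^ d * (t * (N : ℝ) ^ d) := by gcongr; exact hN N (Nat.ceil_pos.2 (div_pos hE0 hε))
    _ = (ε * N) ^ d * t := by rw [mul_pow]; ring
    _ ≤ (E + 1) ^ d * t := by gcongr

/-- The averages of `a` over the lattice points of `ε⁻¹ B` tend to `m` as `ε ↓ 0`, for every
axis-parallel box `B`. -/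
def HasSpatialMean (a : Zd d → ℝ) (m : ℝ) : Prop :=
  ∀ l u : Fin d → ℝ, (∀ i, l i < u i) →
    Tendsto (fun ε : ℝ => ε ^ d * ∑ z ∈ latticeBox ε l u, a z) (𝓝[>] 0)
      (𝓝 ((∏ i, (u i - l i)) * m))

namespace HasSpatialMean

variable {a b : Zd d → ℝ} {m m' : ℝ}

lemma const (c : ℝ) : HasSpatialMean (fun _ : Zd d => c) c := fun _ _ hlu => by
  simpa [mul_assoc] using (tendsto_card_latticeBox fun i => (hlu i).le).mul_const c

lemma add (ha : HasSpatialMean a m) (hb : HasSpatialMean b m') :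
    HasSpatialMean (fun z => a z + b z) (m + m') := fun l u hlu => by
  simpa [Finset.sum_add_distrib, mul_add] using (ha l u hlu).add (hb l u hlu)

lemma const_mul (ha : HasSpatialMean a m) (c : ℝ) :
    HasSpatialMean (fun z => c * a z) (c * m) := fun l u hlu => by
  simpa [← Finset.mul_sum, mul_left_comm] using (ha l u hlu).const_mul c

lemma of_approx (h : ∀ η > 0, ∃ b m', HasSpatialMean b m' ∧ |m' - m| ≤ η ∧
      ∀ N : ℕ, 1 ≤ N → ∑ z ∈ latticeBall 0 N, |a z - b z| ≤ η * (N : ℝ) ^ d) :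
    HasSpatialMean a m := by
  intro l u hlu
  obtain ⟨D, hD, hbox⟩ := exists_sum_latticeBox_le l u
  set v := ∏ i, (u i - l i)
  have hv : 0 < v := Finset.prod_pos fun i _ => sub_pos.2 (hlu i)
  rw [Metric.tendsto_nhds]
  intro η hη
  have hδ : 0 < η / (2 * (D + v)) := by positivity
  obtain ⟨b, m', hb, hm, hmax⟩ := h _ hδ
  have hlim := Metric.tendsto_nhds.1 (hb l u hlu) (η / 2) (by positivity)
  have hone : ∀ᶠ ε in 𝓝[>] (0 : ℝ), ε ≤ 1 := by simpa using eventually_mul_le 1 one_pos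
  filter_upwards [hlim, hone, self_mem_nhdsWithin] with ε hlim hε1 (hε : 0 < ε)
  have hab : |ε ^ d * ∑ z ∈ latticeBox ε l u, a z - ε ^ d * ∑ z ∈ latticeBox ε l u, b z| ≤
      D * (η / (2 * (D + v))) := by
    rw [← mul_sub, ← Finset.sum_sub_distrib, abs_mul, abs_of_pos (pow_pos hε d)]
    refine le_trans ?_ (hbox _ _ (fun _ => abs_nonneg _) hδ.le hmax ε ⟨hε, hε1⟩)
    gcongr
    exact Finset.abs_sum_le_sum_abs _ _
  have hmm : |v * m' - v * m| ≤ v * (η / (2 * (D + v))) := by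
    rw [← mul_sub, abs_mul, abs_of_pos hv]
    gcongr
  have hsum : D * (η / (2 * (D + v))) + v * (η / (2 * (D + v))) = η / 2 := by field_simp
  rw [Real.dist_eq, abs_lt] at hlim ⊢
  rw [abs_le] at hab hmm
  constructor <;> linarith [hlim.1, hlim.2, hab.1, hab.2, hmm.1, hmm.2]

end HasSpatialMean

lemma abs_sum_sub_sum_le_of_subset {ι : Type*} {s t : Finset ι} (hst : s ⊆ t) {a : ι → ℝ} {C : ℝ}
    (ha : ∀ i, |a i| ≤ C) : |∑ i ∈ t, a i - ∑ i ∈ s, a i| ≤ C * (t.card - s.card) := by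
  rw [← Finset.sum_sdiff hst, add_sub_cancel_right]
  refine (Finset.abs_sum_le_sum_abs _ _).trans ((Finset.sum_le_sum fun i _ => ha i).trans_eq ?_)
  rw [Finset.sum_const, nsmul_eq_mul, Finset.card_sdiff_of_subset hst,
    Nat.cast_sub (Finset.card_le_card hst), mul_comm]

lemma hasSpatialMean_sub_translate {a : Zd d → ℝ} {C : ℝ} (ha : ∀ z, |a z| ≤ C) (y : Zd d) :
    HasSpatialMean (fun z => a z - a (z + y)) 0 := by
  intro l u hlu
  rw [mul_zero, Metric.tendsto_nhds]
  intro η hη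
  have hC : 0 ≤ C := (abs_nonneg _).trans (ha 0)
  obtain ⟨γ, hγ, hlu', hvol⟩ := exists_shrink_prod_lt hlu (η := η / (4 * (C + 1))) (by positivity)
  have hcard := ((tendsto_card_latticeBox fun i => (hlu i).le).sub
    (tendsto_card_latticeBox fun i => (hlu' i).le)).eventually_lt_const (sub_lt_iff_lt_add'.2 hvol)
  filter_upwards [hcard, eventually_all.2 fun i => eventually_mul_le |(y i : ℝ)| hγ,
    self_mem_nhdsWithin] with ε hcard hy (hε : 0 < ε)
  set B := latticeBox ε l u
  set B' := latticeBox ε (fun i => l i + γ) (fun i => u i - γ)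
  have hB : B' ⊆ B := fun z hz => by
    simpa using add_mem_latticeBox_of_mem_shrink hε (y := 0) (fun i => by simpa using hγ.le) hz
  have hBy : B' ⊆ B.map (Equiv.addRight y).toEmbedding := fun z hz => by
    simpa using add_mem_latticeBox_of_mem_shrink hε (y := -y) (by simpa using hy) hz
  have h₁ := abs_sum_sub_sum_le_of_subset hB ha
  have h₂ := abs_sum_sub_sum_le_of_subset hBy ha
  rw [Finset.sum_map, Finset.card_map] at h₂
  have h₃ : |∑ z ∈ B, (a z - a (z + y))| ≤ 2 * C * (B.card - B'.card) := by
    rw [Finset.sum_sub_distrib]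
    simp only [Equiv.coe_toEmbedding, Equiv.coe_addRight, abs_le] at h₁ h₂ ⊢
    constructor <;> linarith [h₁.1, h₁.2, h₂.1, h₂.2]
  rw [dist_zero_right, Real.norm_eq_abs, abs_mul, abs_of_pos (pow_pos hε d)]
  calc ε ^ d * |∑ z ∈ B, (a z - a (z + y))| ≤ ε ^ d * (2 * C * (B.card - B'.card)) := by gcongr
    _ = 2 * C * (ε ^ d * B.card - ε ^ d * B'.card) := by ring
    _ ≤ 2 * C * (η / (4 * (C + 1))) := by gcongr
    _ < η := by rw [mul_div_assoc', div_lt_iff₀ (by positivity)]; nlinarith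

end SpatialMean

section Ergodic

/-- An ergodic measure-preserving action `τ` of `ℤ^d` on `(Ω, P)`. -/
structure IsErgodicAction (P : Measure Ω) (τ : Zd d → Ω → Ω) : Prop
    extends IsMeasurePreservingAction P τ where
  measure_eq_zero_or_one : ∀ B, MeasurableSet B → (∀ z, τ z ⁻¹' B = B) → P B = 0 ∨ P B = 1

/-- The conclusion of the pointwise ergodic theorem for the observable `f`: almost every orbit
has spatial mean `∫ f dP`. -/
def HasErgodicMean (P : Measure Ω) (τ : Zd d → Ω → Ω) (f : Ω → ℝ) : Prop :=
  ∀ᵐ ω ∂P, HasSpatialMean (fun z => f (τ z ω)) (∫ ω, f ω ∂P)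

variable {P : Measure Ω} {τ : Zd d → Ω → Ω} {f g : Ω → ℝ}

namespace HasErgodicMean

lemma congr (hτ : IsMeasurePreservingAction P τ) (hfg : f =ᵐ[P] g) (hf : HasErgodicMean P τ f) :
    HasErgodicMean P τ g := by
  filter_upwards [hf, hτ.ae_forall_comp hfg] with ω hω h
  simpa only [h, integral_congr_ae hfg] using hω

lemma const [IsProbabilityMeasure P] (c : ℝ) : HasErgodicMean P τ fun _ => c :=
  ae_of_all _ fun ω => by simpa using HasSpatialMean.const c

lemma add (hfi : Integrable f P) (hgi : Integrable g P) (hf : HasErgodicMean P τ f)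
    (hg : HasErgodicMean P τ g) : HasErgodicMean P τ fun ω => f ω + g ω := by
  filter_upwards [hf, hg] with ω hfω hgω
  rw [integral_add hfi hgi]
  exact hfω.add hgω

lemma const_mul (c : ℝ) (hf : HasErgodicMean P τ f) : HasErgodicMean P τ fun ω => c * f ω := by
  filter_upwards [hf] with ω hω
  rw [integral_const_mul]
  exact hω.const_mul c

lemma sub_comp_of_abs_le (hτ : IsMeasurePreservingAction P τ) (hf : Integrable f P) {C : ℝ}
    (hC : ∀ ω, |f ω| ≤ C) (y : Zd d) : HasErgodicMean P τ fun ω => f ω - f (τ y ω) := by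
  refine ae_of_all _ fun ω => ?_
  rw [integral_sub hf (hτ.integrable_comp hf y), hτ.integral_comp hf, sub_self]
  simpa only [add_comm _ y, hτ.add_apply] using
    hasSpatialMean_sub_translate (a := fun z => f (τ z ω)) (fun z => hC _) y

end HasErgodicMean

lemma integral_abs_sub_le_of_eLpNorm_le {δ : ℝ} (hδ : 0 ≤ δ) (hf : Integrable f P)
    (hg : Integrable g P) (h : eLpNorm (f - g) 1 P ≤ ENNReal.ofReal δ) :
    ∫ ω, |f ω - g ω| ∂P ≤ δ := by
  have hnorm := integral_norm_eq_lintegral_enorm (hf.sub hg).1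
  simp only [Pi.sub_apply, Real.norm_eq_abs] at hnorm
  rw [hnorm]
  rw [eLpNorm_one_eq_lintegral_enorm] at h
  exact ENNReal.toReal_le_of_le_ofReal hδ h

lemma IsMeasurePreservingAction.ae_exists_approx [IsFiniteMeasure P]
    (hτ : IsMeasurePreservingAction P τ) {G : Set (Ω → ℝ)} (hG : ∀ g ∈ G, Integrable g P)
    (hf : Integrable f P)
    (happrox : ∀ δ > 0, ∃ g ∈ G, eLpNorm (f - g) 1 P ≤ ENNReal.ofReal δ) {η : ℝ} (hη : 0 < η) :
    ∀ᵐ ω ∂P, ∃ g ∈ G, |∫ ω, g ω ∂P - ∫ ω, f ω ∂P| ≤ η ∧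
      ∀ N : ℕ, 1 ≤ N → ∑ z ∈ latticeBall 0 N, |f (τ z ω) - g (τ z ω)| ≤ η * (N : ℝ) ^ d := by
  rw [ae_iff]
  have hlim : Tendsto (fun δ : ℝ => ENNReal.ofReal (18 ^ d * δ / η)) (𝓝[>] 0) (𝓝 0) := by
    have hcont : Continuous fun δ : ℝ => ENNReal.ofReal (18 ^ d * δ / η) :=
      ENNReal.continuous_ofReal.comp (by fun_prop)
    simpa using (hcont.tendsto 0).mono_left nhdsWithin_le_nhds
  refine le_antisymm (ge_of_tendsto hlim ?_) zero_le
  filter_upwards [Ioc_mem_nhdsGT hη] with δ ⟨hδ, hδη⟩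
  obtain ⟨g, hgG, hfg⟩ := happrox δ hδ
  have hint := integral_abs_sub_le_of_eLpNorm_le hδ.le hf (hG g hgG) hfg
  have hmean : |∫ ω, g ω ∂P - ∫ ω, f ω ∂P| ≤ η := by
    rw [abs_sub_comm, ← integral_sub hf (hG g hgG)]
    exact abs_integral_le_integral_abs.trans (hint.trans hδη)
  calc _ ≤ P {ω | ∃ N : ℕ, 1 ≤ N ∧
          η * (N : ℝ) ^ d < ∑ z ∈ latticeBall 0 N, |(f - g) (τ z ω)|} := by
        refine measure_mono fun ω hω => ?_
        by_contra hcon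
        simp only [mem_ofPred_eq, not_exists, not_and, not_lt] at hcon
        exact hω ⟨g, hgG, hmean, hcon⟩
    _ ≤ ENNReal.ofReal (18 ^ d * (∫ ω, |(f - g) ω| ∂P) / η) :=
        hτ.measure_exists_lt_sum_norm_le (hf.sub (hG g hgG)) hη
    _ ≤ ENNReal.ofReal (18 ^ d * δ / η) := by gcongr; exact hint

/-- By the maximal inequality, the observables obeying the ergodic theorem are `L¹`-closed. -/
lemma HasErgodicMean.of_approx [IsFiniteMeasure P] (hτ : IsMeasurePreservingAction P τ)
    (hf : Integrable f P)
    (happrox : ∀ δ > 0, ∃ g, Integrable g P ∧ HasErgodicMean P τ g ∧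
      eLpNorm (f - g) 1 P ≤ ENNReal.ofReal δ) : HasErgodicMean P τ f := by
  choose! g hgi hgm hfg using happrox
  set G : Set (Ω → ℝ) := range fun m : ℕ => g (1 / (m + 1))
  have hG : ∀ g ∈ G, Integrable g P := by
    rintro _ ⟨m, rfl⟩
    exact hgi _ Nat.one_div_pos_of_nat
  have hGf : ∀ δ > 0, ∃ g ∈ G, eLpNorm (f - g) 1 P ≤ ENNReal.ofReal δ := by
    intro δ hδ
    obtain ⟨m, hm⟩ := exists_nat_one_div_lt hδ
    exact ⟨_, ⟨m, rfl⟩, (hfg _ Nat.one_div_pos_of_nat).trans (ENNReal.ofReal_le_ofReal hm.le)⟩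
  have hae : ∀ᵐ ω ∂P, ∀ g ∈ G, HasSpatialMean (fun z => g (τ z ω)) (∫ ω, g ω ∂P) :=
    (ae_ball_iff (countable_range _)).2 (by rintro _ ⟨m, rfl⟩; exact hgm _ Nat.one_div_pos_of_nat)
  filter_upwards [hae, ae_all_iff.2 fun m : ℕ =>
    hτ.ae_exists_approx hG hf hGf (Nat.one_div_pos_of_nat (n := m))] with ω hmean happrox
  refine .of_approx fun η hη => ?_
  obtain ⟨m, hm⟩ := exists_nat_one_div_lt hη
  obtain ⟨g, hg, hint, hmax⟩ := happrox m
  refine ⟨_, _, hmean g hg, hint.trans hm.le, fun N hN => (hmax N hN).trans ?_⟩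
  gcongr

lemma HasErgodicMean.sub_comp [IsProbabilityMeasure P] (hτ : IsMeasurePreservingAction P τ)
    (hf : Integrable f P) (y : Zd d) : HasErgodicMean P τ fun ω => f ω - f (τ y ω) := by
  refine .of_approx hτ (hf.sub (hτ.integrable_comp hf y)) fun δ hδ => ?_
  obtain ⟨g, hfg, hg⟩ := (memLp_one_iff_integrable.2 hf).exists_simpleFunc_eLpNorm_sub_lt
    (by simp) (ε := ENNReal.ofReal (δ / 2)) (by simpa using hδ)
  have hgi : Integrable g P := memLp_one_iff_integrable.1 hg
  obtain ⟨C, hC⟩ := g.exists_forall_norm_le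
  refine ⟨_, hgi.sub (hτ.integrable_comp hgi y), sub_comp_of_abs_le hτ hgi hC y, ?_⟩
  have hdecomp : (fun ω => f ω - f (τ y ω)) - (fun ω => g ω - g (τ y ω)) =
      (f - ⇑g) - (f - ⇑g) ∘ τ y := by
    ext ω; simp only [Pi.sub_apply, Function.comp_apply]; ring
  have hs : AEStronglyMeasurable (f - ⇑g) P := (hf.sub hgi).1
  calc eLpNorm ((fun ω => f ω - f (τ y ω)) - fun ω => g ω - g (τ y ω)) 1 P
      ≤ eLpNorm (f - ⇑g) 1 P + eLpNorm ((f - ⇑g) ∘ τ y) 1 P := by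
        rw [hdecomp]
        exact eLpNorm_sub_le hs (hs.comp_measurePreserving (hτ.measurePreserving y)) le_rfl
    _ ≤ ENNReal.ofReal (δ / 2) + ENNReal.ofReal (δ / 2) := by
        rw [eLpNorm_comp_measurePreserving hs (hτ.measurePreserving y)]
        gcongr
    _ = ENNReal.ofReal δ := by rw [← ENNReal.ofReal_add (by positivity) (by positivity), add_halves]

namespace IsErgodicAction

lemma ae_nonpos_or_pos [IsProbabilityMeasure P] (hτ : IsErgodicAction P τ) (hf : Measurable f)
    (hinv : ∀ z, (fun ω => f (τ z ω)) =ᵐ[P] f) : (∀ᵐ ω ∂P, f ω ≤ 0) ∨ ∀ᵐ ω ∂P, 0 < f ω := by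
  set B : Set Ω := ⋂ z, {ω | 0 < f (τ z ω)} with hB
  have hBm : MeasurableSet B := .iInter fun z =>
    measurableSet_lt measurable_const (hf.comp (hτ.measurePreserving z).measurable)
  have hBi (z : Zd d) : τ z ⁻¹' B = B := by
    ext ω
    simp only [hB, mem_preimage, mem_iInter, mem_ofPred_eq, ← hτ.add_apply]
    exact ⟨fun h y => by simpa using h (y - z), fun h y => h (y + z)⟩
  rcases hτ.measure_eq_zero_or_one B hBm hBi with h | h
  · left
    filter_upwards [measure_eq_zero_iff_ae_notMem.1 h, ae_all_iff.2 hinv] with ω hωB hω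
    contrapose! hωB
    simpa only [hB, mem_iInter, mem_ofPred_eq, hω] using fun _ => hωB
  · right
    have hmem : ∀ᵐ ω ∂P, ω ∈ B := (prob_compl_eq_zero_iff hBm).2 h
    filter_upwards [hmem] with ω hω
    simpa [hτ.zero] using mem_iInter.1 hω 0

lemma ae_eq_zero_of_invariant [IsProbabilityMeasure P] (hτ : IsErgodicAction P τ)
    (hfm : Measurable f) (hf : Integrable f P) (hinv : ∀ z, (fun ω => f (τ z ω)) =ᵐ[P] f)
    (hint : ∫ ω, f ω ∂P = 0) : f =ᵐ[P] 0 := by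
  rcases hτ.ae_nonpos_or_pos hfm hinv with h | h
  · have hneg : ∀ᵐ ω ∂P, 0 ≤ -f ω := h.mono fun ω hω => neg_nonneg.2 hω
    have := (integral_eq_zero_iff_of_nonneg_ae hneg hf.neg).1 (by rw [integral_neg, hint, neg_zero])
    exact this.mono fun ω hω => by simpa using hω
  · exact (integral_eq_zero_iff_of_nonneg_ae (h.mono fun ω hω => hω.le) hf).1 hint

end IsErgodicAction

/-- The square-integrable observables for which the ergodic theorem holds. -/
def ergodicMeanSubmodule [IsProbabilityMeasure P] (hτ : IsMeasurePreservingAction P τ) :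
    Submodule ℝ (Lp ℝ 2 P) where
  carrier := {f | HasErgodicMean P τ f}
  add_mem' {f g} hf hg := (HasErgodicMean.add ((Lp.memLp f).integrable one_le_two)
    ((Lp.memLp g).integrable one_le_two) hf hg).congr hτ (Lp.coeFn_add f g).symm
  zero_mem' := (HasErgodicMean.const 0).congr hτ (Lp.coeFn_zero ℝ 2 P).symm
  smul_mem' c f hf := (HasErgodicMean.const_mul c hf).congr hτ (Lp.coeFn_smul c f).symm

section

variable [IsProbabilityMeasure P]

lemma mem_ergodicMeanSubmodule {hτ : IsMeasurePreservingAction P τ} {f : Lp ℝ 2 P} :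
    f ∈ ergodicMeanSubmodule hτ ↔ HasErgodicMean P τ f :=
  Iff.rfl

lemma isClosed_ergodicMeanSubmodule (hτ : IsMeasurePreservingAction P τ) :
    IsClosed (ergodicMeanSubmodule hτ : Set (Lp ℝ 2 P)) := by
  refine isClosed_of_closure_subset fun f hf => ?_
  refine .of_approx hτ ((Lp.memLp f).integrable one_le_two) fun δ hδ => ?_
  obtain ⟨g, hg, hfg⟩ := Metric.mem_closure_iff.1 hf δ hδ
  refine ⟨g, (Lp.memLp g).integrable one_le_two, hg, ?_⟩
  have hsub := (Lp.memLp f).sub (Lp.memLp g)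
  refine (eLpNorm_le_eLpNorm_of_exponent_le one_le_two hsub.1).trans ?_
  rw [← ENNReal.ofReal_toReal hsub.eLpNorm_ne_top]
  exact ENNReal.ofReal_le_ofReal (by simpa only [Lp.dist_def] using hfg.le)

lemma comp_ae_eq_of_mem_orthogonal (hτ : IsMeasurePreservingAction P τ) {f : Lp ℝ 2 P}
    (hf : f ∈ (ergodicMeanSubmodule hτ)ᗮ) (z : Zd d) : (fun ω => f (τ z ω)) =ᵐ[P] f := by
  set U := Lp.compMeasurePreserving (p := 2) (E := ℝ) (τ z) (hτ.measurePreserving z) f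
  have hU : ⇑U =ᵐ[P] f ∘ τ z := Lp.coeFn_compMeasurePreserving f (hτ.measurePreserving z)
  have hmem : f - U ∈ ergodicMeanSubmodule hτ := by
    refine (HasErgodicMean.sub_comp hτ ((Lp.memLp f).integrable one_le_two) z).congr hτ ?_
    filter_upwards [Lp.coeFn_sub f U, hU] with ω h₁ h₂
    rw [h₁, Pi.sub_apply, h₂, Function.comp_apply]
  have hinner := (Submodule.mem_orthogonal _ f).1 hf _ hmem
  have hnorm : ‖U‖ = ‖f‖ := Lp.norm_compMeasurePreserving f (hτ.measurePreserving z)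
  have hfU : ‖f - U‖ ^ 2 = 0 := by
    rw [inner_sub_left, real_inner_self_eq_norm_sq] at hinner
    rw [norm_sub_sq_real, hnorm, real_inner_comm]
    linarith
  have hUf : U = f := (sub_eq_zero.1 (norm_eq_zero.1 (pow_eq_zero_iff two_ne_zero |>.1 hfU))).symm
  rw [hUf] at hU
  exact hU.symm

lemma integral_eq_zero_of_mem_orthogonal (hτ : IsMeasurePreservingAction P τ) {f : Lp ℝ 2 P}
    (hf : f ∈ (ergodicMeanSubmodule hτ)ᗮ) : ∫ ω, f ω ∂P = 0 := by
  have hone : MemLp (fun _ : Ω => (1 : ℝ)) 2 P := memLp_const 1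
  have hmem : hone.toLp _ ∈ ergodicMeanSubmodule hτ :=
    (HasErgodicMean.const 1).congr hτ hone.coeFn_toLp.symm
  rw [← (Submodule.mem_orthogonal _ f).1 hf _ hmem, L2.inner_def]
  refine integral_congr_ae ?_
  filter_upwards [hone.coeFn_toLp] with ω h
  rw [h]
  simp

/-- An observable orthogonal to all coboundaries is invariant, hence constant by ergodicity. -/
lemma IsErgodicAction.ergodicMeanSubmodule_eq_top (hτ : IsErgodicAction P τ) :
    ergodicMeanSubmodule hτ.toIsMeasurePreservingAction = ⊤ := by
  have hτ' := hτ.toIsMeasurePreservingAction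
  have := (isClosed_ergodicMeanSubmodule hτ').completeSpace_coe
  rw [← Submodule.orthogonal_eq_bot_iff, Submodule.eq_bot_iff]
  exact fun f hf => (Lp.eq_zero_iff_ae_eq_zero).2 <| hτ.ae_eq_zero_of_invariant
    (Lp.stronglyMeasurable f).measurable ((Lp.memLp f).integrable one_le_two)
    (comp_ae_eq_of_mem_orthogonal hτ' hf) (integral_eq_zero_of_mem_orthogonal hτ' hf)

theorem IsErgodicAction.hasErgodicMean (hτ : IsErgodicAction P τ) (hf : Integrable f P) :
    HasErgodicMean P τ f := by
  have hτ' := hτ.toIsMeasurePreservingAction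
  refine .of_approx hτ' hf fun δ hδ => ?_
  obtain ⟨g, hfg, hg⟩ := (memLp_one_iff_integrable.2 hf).exists_simpleFunc_eLpNorm_sub_lt
    (by simp) (ε := ENNReal.ofReal δ) (by simpa using hδ)
  have hg2 : MemLp g 2 P := g.memLp_of_isFiniteMeasure 2 P
  have hmem : hg2.toLp _ ∈ ergodicMeanSubmodule hτ' := by
    rw [hτ.ergodicMeanSubmodule_eq_top]
    exact Submodule.mem_top
  exact ⟨g, memLp_one_iff_integrable.1 hg,
    (mem_ergodicMeanSubmodule.1 hmem).congr hτ' hg2.coeFn_toLp, hfg.le⟩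

end

end Ergodic

section LocalSup

variable {E : Type*} [PseudoMetricSpace E]

/-- The supremum of `f` over the closed ball of radius `δ` around `r`. -/
def localSup (f : E → ℝ) (δ : ℝ) (r : E) : ℝ := sSup (f '' closedBall r δ)

variable {f : E → ℝ} {δ δ' : ℝ} {r r' s : E}

lemma localSup_le {C : ℝ} (hδ : 0 ≤ δ) (h : ∀ s, dist s r ≤ δ → f s ≤ C) : localSup f δ r ≤ C :=
  csSup_le ((nonempty_closedBall.2 hδ).image f) <| forall_mem_image.2 fun s hs => h s hs

lemma le_localSup [ProperSpace E] (hf : Continuous f) (h : dist s r ≤ δ) :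
    f s ≤ localSup f δ r :=
  le_csSup ((isCompact_closedBall r δ).bddAbove_image hf.continuousOn) ⟨s, h, rfl⟩

lemma self_le_localSup [ProperSpace E] (hf : Continuous f) (hδ : 0 ≤ δ) : f r ≤ localSup f δ r :=
  le_localSup hf ((dist_self r).trans_le hδ)

lemma localSup_le_localSup [ProperSpace E] (hf : Continuous f) (hδ : 0 ≤ δ)
    (h : dist r r' + δ ≤ δ') : localSup f δ r ≤ localSup f δ' r' :=
  localSup_le hδ fun s hs => le_localSup hf <| by linarith [dist_triangle s r r']

lemma tendsto_localSup [ProperSpace E] (hf : Continuous f) (r : E) :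
    Tendsto (fun δ => localSup f δ r) (𝓝[≥] 0) (𝓝 (f r)) := by
  refine Metric.tendsto_nhds.2 fun η hη => ?_
  obtain ⟨δ₀, hδ₀, h⟩ := Metric.continuous_iff.1 hf r (η / 2) (half_pos hη)
  filter_upwards [self_mem_nhdsWithin, mem_nhdsWithin_of_mem_nhds (Iio_mem_nhds hδ₀)]
    with δ hδ hδδ₀
  have hle : localSup f δ r ≤ f r + η / 2 := localSup_le hδ fun s hs => by
    linarith [(abs_lt.1 (h s (hs.trans_lt hδδ₀))).2]
  rw [Real.dist_eq, abs_of_nonneg (sub_nonneg.2 (self_le_localSup hf hδ))]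
  linarith

lemma measurable_localSup [ProperSpace E] {f : Ω → E → ℝ} (hm : ∀ r, Measurable fun ω => f ω r)
    (hc : ∀ ω, Continuous (f ω)) (hδ : 0 ≤ δ) (r : E) :
    Measurable fun ω => localSup (f ω) δ r := by
  have : Nonempty (closedBall r δ) := (nonempty_closedBall.2 hδ).to_subtype
  have heq (ω : Ω) : localSup (f ω) δ r =
      ⨆ i, f ω (TopologicalSpace.denseSeq (closedBall r δ) i) := by
    rw [localSup, sSup_image']
    exact ((TopologicalSpace.denseRange_denseSeq (closedBall r δ)).ciSup'
      ((hc ω).comp continuous_subtype_val)).symm.trans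
      (iSup_range' (fun x : closedBall r δ => f ω x) _)
  simp only [heq]
  exact .iSup fun i => hm _

end LocalSup

section LatticeEnergy

@[simp] lemma toRd_apply (z : Zd d) (i : Fin d) : toRd z i = (z i : ℝ) := rfl

lemma toRd_add (z y : Zd d) : toRd (z + y) = toRd z + toRd y := by
  ext i; simp

lemma toRd_ne_zero {b : Zd d} (hb : b ≠ 0) : toRd b ≠ 0 := fun h =>
  hb <| funext fun i => by simpa using congrArg (fun x : Rd d => x i) h

/-- The difference quotient `∂_b u(z)` of a lattice function along the edge `(z, z + b)`. -/
def diffQuot (u : Zd d → Rn n) (z b : Zd d) : Rn n := ‖toRd b‖⁻¹ • (u (z + b) - u z)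

/-- The energy over the finite set `S` of sites of the lattice function `u` for a deterministic
family `v` of potentials, `v z b` being the potential of the edge `(z, z + b)`. -/
def latticeEnergy (E0 : Finset (Zd d)) (v : Zd d → Zd d → Rn n → ℝ) (u : Zd d → Rn n)
    (S : Finset (Zd d)) : ℝ :=
  ∑ z ∈ S, ∑ b ∈ E0, v z b (diffQuot u z b)

lemma diffQuot_add (u w : Zd d → Rn n) (z b : Zd d) :
    diffQuot (fun y => u y + w y) z b = diffQuot u z b + diffQuot w z b := by
  rw [diffQuot, diffQuot, diffQuot, ← smul_add, add_sub_add_comm]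

lemma norm_diffQuot_le (F : Rd d →L[ℝ] Rn n) (z b : Zd d) :
    ‖diffQuot (fun y => F (toRd y)) z b‖ ≤ ‖F‖ := by
  rw [diffQuot, toRd_add, map_add, add_sub_cancel_left, norm_smul, norm_inv, norm_norm,
    inv_mul_eq_div]
  exact F.ratio_le_opNorm _

lemma dist_diffQuot_le (F F' : Rd d →L[ℝ] Rn n) (φ : Zd d → Rn n) (z b : Zd d) :
    dist (diffQuot (fun y => F (toRd y) + φ y) z b) (diffQuot (fun y => F' (toRd y) + φ y) z b) ≤
      ‖F - F'‖ := by
  have h : diffQuot (fun y => F (toRd y) + φ y) z b - diffQuot (fun y => F' (toRd y) + φ y) z b =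
      diffQuot (fun y => (F - F') (toRd y)) z b := by
    simp only [diffQuot, ← smul_sub, sub_apply]
    congr 1
    abel
  rw [dist_eq_norm, h]
  exact norm_diffQuot_le _ z b

end LatticeEnergy

section Correctors

/-- The lattice points of the cube `[0,k)^d`. -/
def latticeCube (d k : ℕ) : Finset (Zd d) := Fintype.piFinset fun _ => Finset.Ico 0 (k : ℤ)

lemma mem_latticeCube {k : ℕ} {z : Zd d} : z ∈ latticeCube d k ↔ ∀ i, 0 ≤ z i ∧ z i < k := by
  simp [latticeCube]

lemma card_latticeCube (k : ℕ) : (latticeCube d k).card = k ^ d := by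
  simp [latticeCube]

lemma toRd_mem_cube {k : ℕ} {z : Zd d} : toRd z ∈ cube d k ↔ z ∈ latticeCube d k := by
  rw [mem_latticeCube]
  exact forall_congr' fun i => by simp only [toRd_apply]; norm_cast

/-- The lattice functions competing in `m_F(·; [0,k)^d)`: those vanishing within distance `R` of
the complement of the cube. -/
abbrev Corrector (n : ℕ) (E0 : Finset (Zd d)) (k : ℕ) : Type :=
  {φ : Zd d → Rn n // ∀ z : Zd d, infDist (toRd z) (cube d k)ᶜ ≤ irange d E0 → φ z = 0}

lemma toRd_mem_compl_cube {k : ℕ} {z : Zd d} (hz : z ∉ latticeCube d k) :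
    toRd z ∈ (cube d k)ᶜ := fun h => hz (toRd_mem_cube.1 h)

variable {E0 : Finset (Zd d)} {k : ℕ}

instance : Zero (Corrector n E0 k) := ⟨⟨0, fun _ _ => rfl⟩⟩

instance : TopologicalSpace.SeparableSpace (Corrector n E0 k) :=
  have : SecondCountableTopology (Corrector n E0 k) :=
    TopologicalSpace.Subtype.secondCountableTopology _
  inferInstance

lemma norm_toRd_le_irange {b : Zd d} (hb : b ∈ E0) : ‖toRd b‖ ≤ irange d E0 :=
  le_max_of_le_right <| le_csSup (E0.finite_toSet.image _).bddAbove ⟨b, hb, rfl⟩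

namespace Corrector

lemma apply_add_eq_zero (φ : Corrector n E0 k) {z b : Zd d} (hb : b ∈ E0)
    (hz : z ∉ latticeCube d k) : φ.1 (z + b) = 0 := by
  refine φ.2 _ <| (infDist_le_dist_of_mem (toRd_mem_compl_cube hz)).trans ?_
  rw [dist_eq_norm, toRd_add, add_sub_cancel_left]
  exact norm_toRd_le_irange hb

lemma apply_eq_zero (φ : Corrector n E0 k) {z : Zd d} (hz : z ∉ latticeCube d k) : φ.1 z = 0 := by
  refine φ.2 z ?_
  rw [infDist_zero_of_mem (toRd_mem_compl_cube hz)]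
  exact le_max_of_le_left (by positivity)

lemma exists_norm_le (φ : Corrector n E0 k) : ∃ C, ∀ z, ‖φ.1 z‖ ≤ C := by
  refine ⟨∑ z ∈ latticeCube d k, ‖φ.1 z‖, fun z => ?_⟩
  by_cases hz : z ∈ latticeCube d k
  · exact Finset.single_le_sum (f := fun z => ‖φ.1 z‖) (fun _ _ => norm_nonneg _) hz
  · rw [φ.apply_eq_zero hz, norm_zero]
    positivity

/-- A dense sequence of correctors. -/
def denseSeq (n : ℕ) (E0 : Finset (Zd d)) (k j : ℕ) : Corrector n E0 k :=
  haveI : Nonempty (Corrector n E0 k) := ⟨0⟩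
  TopologicalSpace.denseSeq (Corrector n E0 k) j

lemma denseRange_denseSeq : DenseRange (denseSeq n E0 k) :=
  haveI : Nonempty (Corrector n E0 k) := ⟨0⟩
  TopologicalSpace.denseRange_denseSeq _

end Corrector

end Correctors

section CellProblems

/-- A family of measurable, nonnegative potentials, continuous in the gradient variable and
bounded by an integrable random variable as long as the gradient stays bounded. -/
structure IsRandomPotential (P : Measure Ω) (E0 : Finset (Zd d)) (V : Zd d → Ω → Rn n → ℝ) :
    Prop where
  measurable : ∀ b ∈ E0, Measurable fun q : Ω × Rn n => V b q.1 q.2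
  continuous : ∀ b ∈ E0, ∀ ω, Continuous (V b ω)
  nonneg : ∀ b ∈ E0, ∀ ω r, 0 ≤ V b ω r
  exists_integrable_bound : ∀ M : ℝ, ∃ g : Ω → ℝ, Integrable g P ∧
    ∀ b ∈ E0, ∀ ω r, ‖r‖ ≤ M → V b ω r ≤ g ω

/-- The realization of the random potentials `V` in the environment `ω`. -/
def environment (τ : Zd d → Ω → Ω) (V : Zd d → Ω → Rn n → ℝ) (ω : Ω) : Zd d → Zd d → Rn n → ℝ :=
  fun z b => V b (τ z ω)

/-- The relaxed potentials `r ↦ sup_{|s - r| ≤ δ} V_b(ω; s)`. -/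
def relaxed (V : Zd d → Ω → Rn n → ℝ) (δ : ℝ) : Zd d → Ω → Rn n → ℝ :=
  fun b ω => localSup (V b ω) δ

/-- The energy on the cube `[0,k)^d` of the affine function `F` corrected by `φ`. -/
def cellEnergy (τ : Zd d → Ω → Ω) (E0 : Finset (Zd d)) (V : Zd d → Ω → Rn n → ℝ) (k : ℕ)
    (F : Rd d →L[ℝ] Rn n) (φ : Zd d → Rn n) (ω : Ω) : ℝ :=
  latticeEnergy E0 (environment τ V ω) (fun y => F (toRd y) + φ y) (latticeCube d k)

/-- The minimum over the first `J + 1` correctors of the dense sequence of the cell energy with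
relaxed potentials. It approximates `m_F(ω; [0,k)^d)` from above and depends on countably many
parameters only. -/
def relaxedCellMin (τ : Zd d → Ω → Ω) (E0 : Finset (Zd d)) (V : Zd d → Ω → Rn n → ℝ) (k J : ℕ)
    (δ : ℝ) (F : Rd d →L[ℝ] Rn n) (ω : Ω) : ℝ :=
  ⨅ j : Fin (J + 1), cellEnergy τ E0 (relaxed V δ) k F (Corrector.denseSeq n E0 k j).1 ω

variable {P : Measure Ω} {τ : Zd d → Ω → Ω} {E0 : Finset (Zd d)} {V : Zd d → Ω → Rn n → ℝ}
  {k J : ℕ} {δ : ℝ} {F : Rd d →L[ℝ] Rn n} {φ : Zd d → Rn n} {ω : Ω}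

omit [MeasurableSpace Ω] in
lemma mF_cube_eq_iInf : mF τ E0 V ω F (cube d k) =
    ⨅ φ : Corrector n E0 k, cellEnergy τ E0 V k F φ.1 ω := by
  refine iInf_congr fun φ => ?_
  rw [energy1, tsum_eq_sum (s := latticeCube d k) fun z hz => if_neg (toRd_mem_compl_cube hz)]
  exact Finset.sum_congr rfl fun z hz => if_pos (toRd_mem_cube.2 hz)

omit [MeasurableSpace Ω] in
lemma exists_cellEnergy_eq_relaxedCellMin : ∃ j : Fin (J + 1),
    cellEnergy τ E0 (relaxed V δ) k F (Corrector.denseSeq n E0 k j).1 ω =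
      relaxedCellMin τ E0 V k J δ F ω :=
  exists_eq_ciInf_of_finite

omit [MeasurableSpace Ω] in
lemma relaxedCellMin_le {j : ℕ} (hj : j ≤ J) : relaxedCellMin τ E0 V k J δ F ω ≤
    cellEnergy τ E0 (relaxed V δ) k F (Corrector.denseSeq n E0 k j).1 ω :=
  ciInf_le (f := fun j : Fin (J + 1) =>
    cellEnergy τ E0 (relaxed V δ) k F (Corrector.denseSeq n E0 k j).1 ω)
    (Set.finite_range _).bddBelow ⟨j, Nat.lt_succ_of_le hj⟩

namespace IsRandomPotential

variable (hV : IsRandomPotential P E0 V)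
include hV

lemma measurable_apply {b : Zd d} (hb : b ∈ E0) (r : Rn n) : Measurable fun ω => V b ω r :=
  (hV.measurable b hb).comp (measurable_id.prodMk measurable_const)

lemma measurable_cellEnergy_relaxed (hτ : ∀ z, Measurable (τ z)) (hδ : 0 ≤ δ) :
    Measurable (cellEnergy τ E0 (relaxed V δ) k F φ) :=
  Finset.measurable_sum _ fun z _ => Finset.measurable_sum _ fun b hb =>
    (measurable_localSup (hV.measurable_apply hb) (hV.continuous b hb) hδ _).comp (hτ z)

lemma latticeEnergy_nonneg (u : Zd d → Rn n) (S : Finset (Zd d)) :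
    0 ≤ latticeEnergy E0 (environment τ V ω) u S :=
  Finset.sum_nonneg fun _ _ => Finset.sum_nonneg fun b hb => hV.nonneg b hb _ _

lemma cellEnergy_le_relaxed (hδ : 0 ≤ δ) :
    cellEnergy τ E0 V k F φ ω ≤ cellEnergy τ E0 (relaxed V δ) k F φ ω :=
  Finset.sum_le_sum fun _ _ => Finset.sum_le_sum fun b hb =>
    self_le_localSup (hV.continuous b hb _) hδ

lemma relaxedCellMin_nonneg (hδ : 0 ≤ δ) : 0 ≤ relaxedCellMin τ E0 V k J δ F ω :=
  le_ciInf fun _ => (hV.latticeEnergy_nonneg _ _).trans (hV.cellEnergy_le_relaxed hδ)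

lemma bddBelow_range_cellEnergy {ι : Type*} (φ : ι → Zd d → Rn n) :
    BddBelow (range fun i => cellEnergy τ E0 V k F (φ i) ω) :=
  ⟨0, forall_mem_range.2 fun _ => hV.latticeEnergy_nonneg _ _⟩

lemma mF_cube_eq_iInf_denseSeq : mF τ E0 V ω F (cube d k) =
    ⨅ j, cellEnergy τ E0 V k F (Corrector.denseSeq n E0 k j).1 ω := by
  have hcont : Continuous fun φ : Corrector n E0 k => cellEnergy τ E0 V k F φ.1 ω := by
    refine continuous_finsetSum _ fun z _ => continuous_finsetSum _ fun b hb =>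
      (hV.continuous b hb _).comp ?_
    have happ (y : Zd d) : Continuous fun φ : Corrector n E0 k => φ.1 y :=
      (continuous_apply y).comp continuous_subtype_val
    exact ((continuous_const.add (happ _)).sub
      (continuous_const.add (happ _))).const_smul ‖toRd b‖⁻¹
  rw [mF_cube_eq_iInf, ← Corrector.denseRange_denseSeq.ciInf' hcont]
  exact iInf_range' (fun φ : Corrector n E0 k => cellEnergy τ E0 V k F φ.1 ω) _

lemma mF_cube_le (φ : Corrector n E0 k) : mF τ E0 V ω F (cube d k) ≤ cellEnergy τ E0 V k F φ.1 ω :=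
  mF_cube_eq_iInf.trans_le <|
    ciInf_le (hV.bddBelow_range_cellEnergy fun φ : Corrector n E0 k => φ.1) φ

lemma mF_cube_nonneg : 0 ≤ mF τ E0 V ω F (cube d k) := by
  rw [hV.mF_cube_eq_iInf_denseSeq]
  exact le_ciInf fun _ => hV.latticeEnergy_nonneg _ _

lemma mF_cube_le_relaxedCellMin (hδ : 0 ≤ δ) :
    mF τ E0 V ω F (cube d k) ≤ relaxedCellMin τ E0 V k J δ F ω :=
  le_ciInf fun _ => (hV.mF_cube_le _).trans (hV.cellEnergy_le_relaxed hδ)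

lemma tendsto_cellEnergy_relaxed :
    Tendsto (fun δ => cellEnergy τ E0 (relaxed V δ) k F φ ω) (𝓝[≥] 0)
      (𝓝 (cellEnergy τ E0 V k F φ ω)) :=
  tendsto_finsetSum _ fun _ _ => tendsto_finsetSum _ fun b hb =>
    tendsto_localSup (hV.continuous b hb _) _

end IsRandomPotential

end CellProblems

section HomogenizedDensity

variable {P : Measure Ω} {τ : Zd d → Ω → Ω} {E0 : Finset (Zd d)} {V : Zd d → Ω → Rn n → ℝ}

omit [MeasurableSpace Ω] in
lemma latticeEnergy_le {g : Ω → ℝ} {M : ℝ} {u : Zd d → Rn n} {S : Finset (Zd d)} {ω : Ω}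
    (hg : ∀ b ∈ E0, ∀ ω r, ‖r‖ ≤ M → V b ω r ≤ g ω)
    (hu : ∀ z ∈ S, ∀ b ∈ E0, ‖diffQuot u z b‖ ≤ M) :
    latticeEnergy E0 (environment τ V ω) u S ≤ ∑ z ∈ S, E0.card * g (τ z ω) := by
  refine Finset.sum_le_sum fun z hz => ?_
  rw [← nsmul_eq_mul]
  exact Finset.sum_le_card_nsmul _ _ _ fun b hb => hg b hb _ _ (hu z hz b hb)

omit [MeasurableSpace Ω] in
lemma latticeEnergy_relaxed_le {g : Ω → ℝ} {M δ : ℝ} {u : Zd d → Rn n} {S : Finset (Zd d)} {ω : Ω}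
    (hg : ∀ b ∈ E0, ∀ ω r, ‖r‖ ≤ M + δ → V b ω r ≤ g ω) (hδ : 0 ≤ δ)
    (hu : ∀ z ∈ S, ∀ b ∈ E0, ‖diffQuot u z b‖ ≤ M) :
    latticeEnergy E0 (environment τ (relaxed V δ) ω) u S ≤ ∑ z ∈ S, E0.card * g (τ z ω) :=
  latticeEnergy_le (fun b hb ω r hr => localSup_le hδ fun s hs => hg b hb ω s <| by
    rw [dist_eq_norm] at hs
    linarith [norm_le_norm_add_norm_sub' s r]) hu

namespace IsRandomPotential

variable (hV : IsRandomPotential P E0 V)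
include hV

lemma card_mul_bound_nonneg {g : Ω → ℝ} {M : ℝ} (hM : 0 ≤ M)
    (hg : ∀ b ∈ E0, ∀ ω r, ‖r‖ ≤ M → V b ω r ≤ g ω) (ω : Ω) : 0 ≤ E0.card * g ω := by
  rw [← nsmul_eq_mul]
  exact (Finset.sum_nonneg fun b hb => hV.nonneg b hb ω 0).trans <|
    Finset.sum_le_card_nsmul _ _ _ fun b hb => hg b hb ω 0 (norm_zero.trans_le hM)

lemma tendsto_relaxedCellMin (k : ℕ) (F : Rd d →L[ℝ] Rn n) (ω : Ω) {δ : ℕ → ℝ}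
    (hδ : Tendsto δ atTop (𝓝[≥] 0)) (hδ0 : ∀ m, 0 ≤ δ m) :
    Tendsto (fun m => relaxedCellMin τ E0 V k m (δ m) F ω) atTop
      (𝓝 (mF τ E0 V ω F (cube d k))) := by
  refine tendsto_order.2 ⟨fun c hc => .of_forall fun m =>
    hc.trans_le (hV.mF_cube_le_relaxedCellMin (hδ0 m)), fun c hc => ?_⟩
  rw [hV.mF_cube_eq_iInf_denseSeq] at hc
  obtain ⟨j, hj⟩ := exists_lt_of_ciInf_lt hc
  filter_upwards [(hV.tendsto_cellEnergy_relaxed.comp hδ).eventually_lt_const hj,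
    eventually_ge_atTop j] with m hm hjm
  exact (relaxedCellMin_le hjm).trans_lt hm

lemma exists_integrable_bound_relaxedCellMin (hτ : IsMeasurePreservingAction P τ) (k : ℕ)
    (F : Rd d →L[ℝ] Rn n) (δ₀ : ℝ) : ∃ G : Ω → ℝ, Integrable G P ∧
      ∀ J δ ω, 0 ≤ δ → δ ≤ δ₀ → relaxedCellMin τ E0 V k J δ F ω ≤ G ω := by
  set u : Zd d → Rn n := fun y => F (toRd y) + (Corrector.denseSeq n E0 k 0).1 y
  set M := ∑ z ∈ latticeCube d k, ∑ b ∈ E0, ‖diffQuot u z b‖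
  obtain ⟨g, hgi, hg⟩ := hV.exists_integrable_bound (M + δ₀)
  refine ⟨fun ω => ∑ z ∈ latticeCube d k, E0.card * g (τ z ω), integrable_finsetSum _ fun z _ =>
    (hτ.integrable_comp hgi z).const_mul _, fun J δ ω hδ hδδ₀ => ?_⟩
  refine (relaxedCellMin_le (Nat.zero_le J)).trans <| latticeEnergy_relaxed_le (M := M)
    (fun b hb ω r hr => hg b hb ω r (by linarith)) hδ fun z hz b hb => ?_
  exact (Finset.single_le_sum (f := fun b => ‖diffQuot u z b‖) (fun _ _ => norm_nonneg _) hb).trans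
    (Finset.single_le_sum (f := fun z => ∑ b ∈ E0, ‖diffQuot u z b‖)
      (fun _ _ => by positivity) hz)

lemma measurable_relaxedCellMin (hτ : IsMeasurePreservingAction P τ) {k J : ℕ} {δ : ℝ} (hδ : 0 ≤ δ)
    {F : Rd d →L[ℝ] Rn n} : Measurable (relaxedCellMin τ E0 V k J δ F) :=
  .iInf fun _ => hV.measurable_cellEnergy_relaxed (fun z => (hτ.measurePreserving z).measurable) hδ

lemma integrable_relaxedCellMin (hτ : IsMeasurePreservingAction P τ) {k J : ℕ} {δ : ℝ} (hδ : 0 ≤ δ)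
    {F : Rd d →L[ℝ] Rn n} : Integrable (relaxedCellMin τ E0 V k J δ F) P := by
  obtain ⟨G, hGi, hG⟩ := hV.exists_integrable_bound_relaxedCellMin hτ k F δ
  refine hGi.mono' (hV.measurable_relaxedCellMin hτ hδ).aestronglyMeasurable <|
    .of_forall fun ω => ?_
  rw [Real.norm_of_nonneg (hV.relaxedCellMin_nonneg hδ)]
  exact hG J δ ω hδ le_rfl

lemma tendsto_integral_relaxedCellMin (hτ : IsMeasurePreservingAction P τ) (k : ℕ)
    (F : Rd d →L[ℝ] Rn n) {δ : ℕ → ℝ} {δ₀ : ℝ} (hδ : Tendsto δ atTop (𝓝[≥] 0))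
    (hδ0 : ∀ m, 0 ≤ δ m) (hδ₀ : ∀ m, δ m ≤ δ₀) :
    Tendsto (fun m => ∫ ω, relaxedCellMin τ E0 V k m (δ m) F ω ∂P) atTop
      (𝓝 (∫ ω, mF τ E0 V ω F (cube d k) ∂P)) := by
  obtain ⟨G, hGi, hG⟩ := hV.exists_integrable_bound_relaxedCellMin hτ k F δ₀
  refine tendsto_integral_of_dominated_convergence G
    (fun m => (hV.measurable_relaxedCellMin hτ (hδ0 m)).aestronglyMeasurable) hGi
    (fun m => .of_forall fun ω => ?_)
    (.of_forall fun ω => hV.tendsto_relaxedCellMin k F ω hδ hδ0)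
  rw [Real.norm_of_nonneg (hV.relaxedCellMin_nonneg (hδ0 m))]
  exact hG m _ ω (hδ0 m) (hδ₀ m)

lemma relaxedCellMin_le_relaxedCellMin {k J : ℕ} {δ δ' : ℝ} {F F' : Rd d →L[ℝ] Rn n} {ω : Ω}
    (hδ : 0 ≤ δ) (h : ‖F - F'‖ + δ ≤ δ') :
    relaxedCellMin τ E0 V k J δ F ω ≤ relaxedCellMin τ E0 V k J δ' F' ω :=
  ciInf_mono (Set.finite_range _).bddBelow fun j => Finset.sum_le_sum fun z _ =>
    Finset.sum_le_sum fun b hb => localSup_le_localSup (hV.continuous b hb _) hδ <| by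
      linarith [dist_diffQuot_le F F' (Corrector.denseSeq n E0 k j).1 z b]

/-- Countably many cell problems suffice to approximate `W₀` from above. -/
lemma exists_integral_relaxedCellMin_lt (hτ : IsMeasurePreservingAction P τ)
    {D : Set (Rd d →L[ℝ] Rn n)} (hD : Dense D) {F : Rd d →L[ℝ] Rn n} {c : ℝ}
    (hc : W0 P τ E0 V F < c) :
    ∃ k J m : ℕ, ∃ F' ∈ D, 0 < k ∧ ‖F - F'‖ < 1 / ((m : ℝ) + 1) ∧
      ((k : ℝ) ^ d)⁻¹ * ∫ ω, relaxedCellMin τ E0 V k J (1 / ((m : ℝ) + 1)) F' ω ∂P < c := by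
  have : Nonempty {k : ℕ // 0 < k} := ⟨⟨1, one_pos⟩⟩
  obtain ⟨⟨k, hk⟩, hkc⟩ := exists_lt_of_ciInf_lt hc
  have hδ0 (m : ℕ) : 0 ≤ 1 / ((m : ℝ) + 1) := by positivity
  have hδ : Tendsto (fun m : ℕ => 1 / ((m : ℝ) + 1)) atTop (𝓝[≥] 0) :=
    tendsto_nhdsWithin_iff.2 ⟨tendsto_one_div_add_atTop_nhds_zero_nat, .of_forall hδ0⟩
  have hlim := hV.tendsto_integral_relaxedCellMin hτ k F hδ hδ0 (δ₀ := 1) fun m =>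
    div_le_one_of_le₀ (by simp) (by positivity)
  obtain ⟨J, hJ⟩ := ((hlim.const_mul ((k : ℝ) ^ d)⁻¹).eventually_lt_const hkc).exists
  set m := 2 * J + 1 with hm
  obtain ⟨F', hF', hFF'⟩ := hD.exists_dist_lt F (show (0 : ℝ) < 1 / ((m : ℝ) + 1) by positivity)
  rw [dist_eq_norm] at hFF'
  refine ⟨k, J, m, F', hF', hk, hFF', lt_of_le_of_lt ?_ hJ⟩
  have hsum : 1 / ((m : ℝ) + 1) + 1 / ((m : ℝ) + 1) = 1 / ((J : ℝ) + 1) := by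
    rw [hm]
    push_cast
    field_simp
    ring
  rw [norm_sub_rev] at hFF'
  exact mul_le_mul_of_nonneg_left (integral_mono (hV.integrable_relaxedCellMin hτ (hδ0 m))
    (hV.integrable_relaxedCellMin hτ (hδ0 J)) fun ω =>
      hV.relaxedCellMin_le_relaxedCellMin (hδ0 m) (by linarith)) (by positivity)

lemma W0_nonneg (F : Rd d →L[ℝ] Rn n) : 0 ≤ W0 P τ E0 V F :=
  Real.iInf_nonneg fun _ => mul_nonneg (by positivity) (integral_nonneg fun _ => hV.mF_cube_nonneg)

lemma exists_W0_le (hτ : IsMeasurePreservingAction P τ) (M : ℝ) :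
    ∃ C : ℝ, ∀ F : Rd d →L[ℝ] Rn n, ‖F‖ ≤ M → W0 P τ E0 V F ≤ C := by
  obtain ⟨g, hgi, hg⟩ := hV.exists_integrable_bound (M + 0)
  refine ⟨∫ ω, ∑ z ∈ latticeCube d 1, E0.card * g (τ z ω) ∂P, fun F hF => ?_⟩
  have hbdd : BddBelow (range fun k : {k : ℕ // 0 < k} =>
      ((k : ℝ) ^ d)⁻¹ * ∫ ω, mF τ E0 V ω F (cube d k) ∂P) :=
    ⟨0, forall_mem_range.2 fun k => mul_nonneg (by positivity)
      (integral_nonneg fun _ => hV.mF_cube_nonneg)⟩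
  refine (ciInf_le hbdd ⟨1, one_pos⟩).trans ?_
  simp only [Nat.cast_one, one_pow, inv_one, one_mul]
  refine integral_mono_of_nonneg (.of_forall fun _ => hV.mF_cube_nonneg)
    (integrable_finsetSum _ fun z _ => (hτ.integrable_comp hgi z).const_mul _)
    (.of_forall fun ω => (hV.mF_cube_le 0).trans <| (hV.cellEnergy_le_relaxed le_rfl).trans <|
      latticeEnergy_relaxed_le hg le_rfl fun z _ b _ => ?_)
  have h0 : (0 : Corrector n E0 1).1 = 0 := rfl
  simpa [h0] using (norm_diffQuot_le F z b).trans hF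

lemma measurable_W0 [SFinite P] (hτ : IsMeasurePreservingAction P τ) :
    Measurable fun F : Rd d →L[ℝ] Rn n => W0 P τ E0 V F := by
  refine .iInf fun k => .const_mul ?_ _
  have hm : Measurable fun q : (Rd d →L[ℝ] Rn n) × Ω => mF τ E0 V q.2 q.1 (cube d k) := by
    simp only [hV.mF_cube_eq_iInf_denseSeq]
    refine .iInf fun j => Finset.measurable_sum _ fun z _ => Finset.measurable_sum _ fun b hb =>
      (hV.measurable b hb).comp
        (((hτ.measurePreserving z).measurable.comp measurable_snd).prodMk ?_)
    have hF (x : Rd d) : Measurable fun q : (Rd d →L[ℝ] Rn n) × Ω => q.1 x :=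
      (ContinuousLinearMap.measurable_apply x).comp measurable_fst
    exact (((hF _).add_const _).sub ((hF _).add_const _)).const_smul (‖toRd b‖)⁻¹
  exact (hm.stronglyMeasurable.integral_prod_right' (ν := P)).measurable

end IsRandomPotential

end HomogenizedDensity

section Tiling

/-- The corner `c ∈ s + kℤ^d` of the tile `c + [0,k)^d` that contains `z`. -/
def tileCorner (k : ℕ) (s z : Zd d) : Zd d := fun i => z i - (z i - s i) % k

/-- The tile `c + [0,k)^d` is contained in `B`. -/
def TileSubset (k : ℕ) (B : Finset (Zd d)) (c : Zd d) : Prop := ∀ y ∈ latticeCube d k, c + y ∈ B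

/-- The points of `B` within `ℓ^∞`-distance `k` of the complement of `B`. -/
def latticeBoundary (k : ℕ) (B : Finset (Zd d)) : Finset (Zd d) :=
  {z ∈ B | ∃ y : Zd d, (∀ i, |y i| ≤ k) ∧ z + y ∉ B}

/-- A lattice function bounded by `C` that changes neither the values outside `B` nor the
difference quotients based outside `B`. -/
structure IsLocalPerturbation (E0 B : Finset (Zd d)) (C : ℝ) (w : Zd d → Rn n) : Prop where
  norm_le : ∀ z, ‖w z‖ ≤ C
  apply_eq_zero : ∀ z ∉ B, w z = 0
  apply_add_eq_zero : ∀ z ∉ B, ∀ b ∈ E0, w (z + b) = 0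

variable {E0 B : Finset (Zd d)} {k : ℕ} {s z c : Zd d}

lemma sub_tileCorner_mem (hk : 0 < k) (s z : Zd d) : z - tileCorner k s z ∈ latticeCube d k := by
  have h : (0 : ℤ) < k := by exact_mod_cast hk
  simp only [mem_latticeCube, tileCorner, Pi.sub_apply, sub_sub_cancel]
  exact fun i => ⟨Int.emod_nonneg _ h.ne', Int.emod_lt_of_pos _ h⟩

lemma tileCorner_eq_sub (k : ℕ) (s z : Zd d) (i : Fin d) :
    tileCorner k s z i = s i + k * ((z i - s i) / k) := by
  have := Int.mul_ediv_add_emod (z i - s i) k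
  rw [tileCorner]
  linarith

lemma tileCorner_eq_of_sub_mem {z' : Zd d} (h : z' - tileCorner k s z ∈ latticeCube d k) :
    tileCorner k s z' = tileCorner k s z := by
  ext i
  have hi := mem_latticeCube.1 h i
  rw [Pi.sub_apply] at hi
  have hz' : z' i - s i = (z' i - tileCorner k s z i) + k * ((z i - s i) / k) := by
    rw [tileCorner_eq_sub]
    ring
  conv_lhs => rw [tileCorner, hz', Int.add_mul_emod_self_left, Int.emod_eq_of_lt hi.1 hi.2]
  ring

lemma tileCorner_emod (hs : s ∈ latticeCube d k) : (fun i => tileCorner k s z i % (k : ℤ)) = s := by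
  ext i
  have hi := mem_latticeCube.1 hs i
  rw [tileCorner_eq_sub, Int.add_mul_emod_self_left, Int.emod_eq_of_lt hi.1 hi.2]

lemma zero_mem_latticeCube (hk : 0 < k) : (0 : Zd d) ∈ latticeCube d k :=
  mem_latticeCube.2 fun _ => ⟨le_rfl, Nat.cast_pos.2 hk⟩

lemma exists_offset_sum_le (hk : 0 < k) (B : Finset (Zd d)) (g : Zd d → ℝ) :
    ∃ s ∈ latticeCube d k,
      ∑ c ∈ B with (fun i => c i % (k : ℤ)) = s, g c ≤ ((k : ℝ) ^ d)⁻¹ * ∑ c ∈ B, g c := by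
  have h : (0 : ℤ) < k := by exact_mod_cast hk
  have hmap (c) (_ : c ∈ B) : (fun i => c i % (k : ℤ)) ∈ latticeCube d k :=
    mem_latticeCube.2 fun i => ⟨Int.emod_nonneg _ h.ne', Int.emod_lt_of_pos _ h⟩
  refine Finset.exists_le_of_sum_le ⟨0, zero_mem_latticeCube hk⟩ ?_
  rw [Finset.sum_fiberwise_of_maps_to hmap, Finset.sum_const, card_latticeCube, nsmul_eq_mul,
    Nat.cast_pow, mul_inv_cancel_left₀ (by positivity)]

lemma sum_tile_le (hk : 0 < k) {h : Zd d → ℝ} (hh : ∀ y, 0 ≤ h y) :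
    ∑ z ∈ B with tileCorner k s z = c, h (z - c) ≤ ∑ y ∈ latticeCube d k, h y := by
  rw [← Finset.sum_image (f := h) (g := fun z => z - c) fun x _ y _ => sub_left_inj.1]
  refine Finset.sum_le_sum_of_subset_of_nonneg (Finset.image_subset_iff.2 fun z hz => ?_)
    fun y _ _ => hh y
  rw [← (Finset.mem_filter.1 hz).2]
  exact sub_tileCorner_mem hk s z

lemma TileSubset.mem (hk : 0 < k) (h : TileSubset k B (tileCorner k s z)) : z ∈ B := by
  simpa using h _ (sub_tileCorner_mem hk s z)

lemma TileSubset.corner_mem (hk : 0 < k) (h : TileSubset k B c) : c ∈ B := by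
  simpa using h 0 (zero_mem_latticeCube hk)

lemma mem_latticeBoundary_of_not_tileSubset (hk : 0 < k) (hz : z ∈ B)
    (h : ¬ TileSubset k B (tileCorner k s z)) : z ∈ latticeBoundary k B := by
  simp only [TileSubset, not_forall] at h
  obtain ⟨y, hy, hyB⟩ := h
  refine Finset.mem_filter.2 ⟨hz, y - (z - tileCorner k s z), fun i => ?_, ?_⟩
  · have h1 := mem_latticeCube.1 (sub_tileCorner_mem hk s z) i
    have h2 := mem_latticeCube.1 hy i
    rw [Pi.sub_apply, abs_le]
    constructor <;> linarith
  · rwa [show z + (y - (z - tileCorner k s z)) = tileCorner k s z + y by abel]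

/-- The lattice function equal to the translate of the corrector `φ c` on each tile
`c + [0,k)^d`, `c ∈ s + kℤ^d`, contained in `B`, and to `0` elsewhere. -/
def tiledCorrector (k : ℕ) (s : Zd d) (B : Finset (Zd d)) (φ : Zd d → Corrector n E0 k) (z : Zd d) :
    Rn n :=
  if TileSubset k B (tileCorner k s z) then (φ (tileCorner k s z)).1 (z - tileCorner k s z) else 0

variable {φ : Zd d → Corrector n E0 k}

/- Correctors vanish near the boundary of their cube, so that the difference quotients at `z` see
only the corrector of the tile of `z`. -/
lemma tiledCorrector_add {b : Zd d} (hb : b ∈ E0) : tiledCorrector k s B φ (z + b) =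
    if TileSubset k B (tileCorner k s z) then
      (φ (tileCorner k s z)).1 (z - tileCorner k s z + b) else 0 := by
  rw [sub_add_eq_add_sub]
  by_cases hc : tileCorner k s (z + b) = tileCorner k s z
  · rw [tiledCorrector, hc]
  · have h := (φ (tileCorner k s (z + b))).apply_add_eq_zero hb fun h =>
      hc (tileCorner_eq_of_sub_mem h).symm
    rw [sub_add_eq_add_sub] at h
    rw [tiledCorrector, h,
      (φ (tileCorner k s z)).apply_eq_zero fun h => hc (tileCorner_eq_of_sub_mem h), ite_self,
      ite_self]

lemma diffQuot_tiledCorrector {b : Zd d} (hb : b ∈ E0) (h : TileSubset k B (tileCorner k s z)) :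
    diffQuot (tiledCorrector k s B φ) z b =
      diffQuot (φ (tileCorner k s z)).1 (z - tileCorner k s z) b := by
  rw [diffQuot, tiledCorrector_add hb, tiledCorrector, if_pos h, if_pos h, diffQuot]

lemma diffQuot_tiledCorrector_eq_zero {b : Zd d} (hb : b ∈ E0)
    (h : ¬ TileSubset k B (tileCorner k s z)) : diffQuot (tiledCorrector k s B φ) z b = 0 := by
  rw [diffQuot, tiledCorrector_add hb, tiledCorrector, if_neg h, if_neg h, sub_self, smul_zero]

lemma isLocalPerturbation_tiledCorrector (hk : 0 < k) {C : ℝ} (hφ : ∀ c z, ‖(φ c).1 z‖ ≤ C) :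
    IsLocalPerturbation E0 B C (tiledCorrector k s B φ) where
  norm_le z := by
    rw [tiledCorrector]
    split_ifs
    · exact hφ _ _
    · rw [norm_zero]
      exact (norm_nonneg _).trans (hφ 0 0)
  apply_eq_zero z hz := if_neg fun h => hz (h.mem hk)
  apply_add_eq_zero z hz b hb := by rw [tiledCorrector_add hb, if_neg fun h => hz (h.mem hk)]

variable {P : Measure Ω} {τ : Zd d → Ω → Ω} {V : Zd d → Ω → Rn n → ℝ} {F : Rd d →L[ℝ] Rn n}
  {v : Zd d → Rn n} {δ : ℝ} {ω : Ω}

lemma IsRandomPotential.latticeEnergy_tiledCorrector_tiles_le (hV : IsRandomPotential P E0 V)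
    (hτ : IsMeasurePreservingAction P τ) (hk : 0 < k) (hs : s ∈ latticeCube d k) (hδ : 0 ≤ δ)
    (hv : ∀ z ∈ B, ∀ b ∈ E0, dist (diffQuot v z b) (diffQuot (fun y => F (toRd y)) z b) ≤ δ) :
    latticeEnergy E0 (environment τ V ω) (fun z => v z + tiledCorrector k s B φ z)
        {z ∈ B | TileSubset k B (tileCorner k s z)} ≤
      ∑ c ∈ B with (fun i => c i % (k : ℤ)) = s,
        cellEnergy τ E0 (relaxed V δ) k F (φ c).1 (τ c ω) := by
  have hmap (z) (hz : z ∈ {z ∈ B | TileSubset k B (tileCorner k s z)}) :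
      tileCorner k s z ∈ {c ∈ B | (fun i => c i % (k : ℤ)) = s} :=
    Finset.mem_filter.2 ⟨(Finset.mem_filter.1 hz).2.corner_mem hk, tileCorner_emod hs⟩
  rw [latticeEnergy, ← Finset.sum_fiberwise_of_maps_to hmap]
  refine Finset.sum_le_sum fun c _ => ?_
  set u : Zd d → Rn n := fun y => F (toRd y) + (φ c).1 y
  have hnn (y : Zd d) : 0 ≤ ∑ b ∈ E0, environment τ (relaxed V δ) (τ c ω) y b (diffQuot u y b) :=
    Finset.sum_nonneg fun b hb => (hV.nonneg b hb _ _).trans <|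
      self_le_localSup (hV.continuous b hb _) hδ
  refine (Finset.sum_le_sum fun z hz => Finset.sum_le_sum fun b hb => ?_).trans
    (sum_tile_le hk hnn)
  obtain ⟨hz', rfl⟩ := Finset.mem_filter.1 hz
  obtain ⟨hzB, hzT⟩ := Finset.mem_filter.1 hz'
  have henv : environment τ (relaxed V δ) (τ (tileCorner k s z) ω) (z - tileCorner k s z) b =
      relaxed V δ b (τ z ω) := by
    rw [environment, ← hτ.add_apply, sub_add_cancel]
  rw [henv]
  refine le_localSup (hV.continuous b hb _) ?_
  rw [diffQuot_add, diffQuot_add, diffQuot_tiledCorrector hb hzT, dist_add_right]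
  simpa [diffQuot, toRd_add] using hv z hzB b hb

lemma IsRandomPotential.latticeEnergy_tiledCorrector_compl_le (hV : IsRandomPotential P E0 V)
    (hk : 0 < k) (hδ : 0 ≤ δ) {g : Ω → ℝ}
    (hg : ∀ b ∈ E0, ∀ ω r, ‖r‖ ≤ ‖F‖ + δ → V b ω r ≤ g ω)
    (hv : ∀ z ∈ B, ∀ b ∈ E0, dist (diffQuot v z b) (diffQuot (fun y => F (toRd y)) z b) ≤ δ) :
    latticeEnergy E0 (environment τ V ω) (fun z => v z + tiledCorrector k s B φ z)
        {z ∈ B | ¬ TileSubset k B (tileCorner k s z)} ≤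
      ∑ z ∈ latticeBoundary k B, E0.card * g (τ z ω) := by
  refine (latticeEnergy_le hg fun z hz b hb => ?_).trans <|
    Finset.sum_le_sum_of_subset_of_nonneg (fun z hz => ?_) fun z _ _ => ?_
  · obtain ⟨hzB, hzT⟩ := Finset.mem_filter.1 hz
    rw [diffQuot_add, diffQuot_tiledCorrector_eq_zero hb hzT, add_zero]
    have h := hv z hzB b hb
    rw [dist_eq_norm] at h
    linarith [norm_le_norm_add_norm_sub' (diffQuot v z b) (diffQuot (fun y => F (toRd y)) z b),
      norm_diffQuot_le F z b]
  · exact mem_latticeBoundary_of_not_tileSubset hk (Finset.mem_filter.1 hz).1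
      (Finset.mem_filter.1 hz).2
  · exact hV.card_mul_bound_nonneg (add_nonneg (norm_nonneg F) hδ) hg _

/-- Averaging over the offset of the tiling turns the sum over the tiles into a sum over all
lattice points, to which the ergodic theorem for the full action applies. -/
lemma IsRandomPotential.exists_tiling (hV : IsRandomPotential P E0 V)
    (hτ : IsMeasurePreservingAction P τ) (hk : 0 < k) (J : ℕ) {C : ℝ}
    (hC : ∀ j : Fin (J + 1), ∀ z, ‖(Corrector.denseSeq n E0 k j).1 z‖ ≤ C) (hδ : 0 ≤ δ)
    {g : Ω → ℝ} (hg : ∀ b ∈ E0, ∀ ω r, ‖r‖ ≤ ‖F‖ + δ → V b ω r ≤ g ω)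
    (hv : ∀ z ∈ B, ∀ b ∈ E0, dist (diffQuot v z b) (diffQuot (fun y => F (toRd y)) z b) ≤ δ) :
    ∃ w : Zd d → Rn n, IsLocalPerturbation E0 B C w ∧
      latticeEnergy E0 (environment τ V ω) (fun z => v z + w z) B ≤
        ((k : ℝ) ^ d)⁻¹ * ∑ z ∈ B, relaxedCellMin τ E0 V k J δ F (τ z ω) +
          ∑ z ∈ latticeBoundary k B, E0.card * g (τ z ω) := by
  obtain ⟨s, hs, hsum⟩ :=
    exists_offset_sum_le hk B fun c => relaxedCellMin τ E0 V k J δ F (τ c ω)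
  choose j hj using fun c => exists_cellEnergy_eq_relaxedCellMin
    (τ := τ) (E0 := E0) (V := V) (k := k) (J := J) (δ := δ) (F := F) (ω := τ c ω)
  simp only [← hj] at hsum
  refine ⟨_, isLocalPerturbation_tiledCorrector (s := s) hk fun c => hC (j c), ?_⟩
  simp only [← hj] at hsum ⊢
  rw [latticeEnergy, ← Finset.sum_filter_add_sum_filter_not B
    (fun z => TileSubset k B (tileCorner k s z))]
  exact add_le_add ((hV.latticeEnergy_tiledCorrector_tiles_le hτ hk hs hδ hv).trans hsum)
    (hV.latticeEnergy_tiledCorrector_compl_le hk hδ hg hv)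

end Tiling

section LocalRecovery

/-- The lattice function `z ↦ ε⁻¹ u(εz)`, whose difference quotients are those of the restriction
of `u` to `εℤ^d`. -/
def rescale (ε : ℝ) (u : Rd d → Rn n) (z : Zd d) : Rn n := ε⁻¹ • u (ε • toRd z)

/-- For every `A' > A` and every small `ε`, a perturbation of order `ε` supported in the box `I`
brings the energy of `u` on `I ∩ εℤ^d` below `A'`. -/
def AdmitsRecovery (τ : Zd d → Ω → Ω) (E0 : Finset (Zd d)) (V : Zd d → Ω → Rn n → ℝ) (ω : Ω)
    (u : Rd d → Rn n) (I : BoxIntegral.Box (Fin d)) (A : ℝ) : Prop :=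
  ∀ A' > A, ∃ C : ℝ, ∀ᶠ ε in 𝓝[>] (0 : ℝ), ∃ w : Zd d → Rn n,
    IsLocalPerturbation E0 (latticeBox ε I.lower I.upper) C w ∧
      ε ^ d * latticeEnergy E0 (environment τ V ω) (fun z => rescale ε u z + w z)
        (latticeBox ε I.lower I.upper) ≤ A'

/-- The realizations `ω` to which the ergodic theorem applies for all the functionals used in the
construction; `D` is the set of affine boundary data of the cell problems. -/
structure IsTypical (P : Measure Ω) (τ : Zd d → Ω → Ω) (E0 : Finset (Zd d))
    (V : Zd d → Ω → Rn n → ℝ) (D : Set (Rd d →L[ℝ] Rn n)) (ω : Ω) : Prop where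
  hasSpatialMean_relaxedCellMin : ∀ k J m : ℕ, ∀ F ∈ D,
    HasSpatialMean (fun z => relaxedCellMin τ E0 V k J (1 / ((m : ℝ) + 1)) F (τ z ω))
      (∫ ω, relaxedCellMin τ E0 V k J (1 / ((m : ℝ) + 1)) F ω ∂P)
  exists_bound : ∀ M : ℝ, ∃ g : Ω → ℝ, (∀ b ∈ E0, ∀ ω r, ‖r‖ ≤ M → V b ω r ≤ g ω) ∧
    ∃ m, HasSpatialMean (fun z => g (τ z ω)) m

variable {P : Measure Ω} {τ : Zd d → Ω → Ω} {E0 : Finset (Zd d)} {V : Zd d → Ω → Rn n → ℝ}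
  {D : Set (Rd d →L[ℝ] Rn n)} {ω : Ω} {u : Rd d → Rn n} {I : BoxIntegral.Box (Fin d)} {A : ℝ}

lemma IsErgodicAction.ae_isTypical [IsProbabilityMeasure P] (hτ : IsErgodicAction P τ)
    (hV : IsRandomPotential P E0 V) (hD : D.Countable) : ∀ᵐ ω ∂P, IsTypical P τ E0 V D ω := by
  have hcell : ∀ᵐ ω ∂P, ∀ k J m : ℕ, ∀ F ∈ D,
      HasSpatialMean (fun z => relaxedCellMin τ E0 V k J (1 / ((m : ℝ) + 1)) F (τ z ω))
        (∫ ω, relaxedCellMin τ E0 V k J (1 / ((m : ℝ) + 1)) F ω ∂P) := by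
    simp only [ae_all_iff, ae_ball_iff hD]
    exact fun k J m F _ => hτ.hasErgodicMean <|
      hV.integrable_relaxedCellMin hτ.toIsMeasurePreservingAction (by positivity)
  choose g hgi hg using fun M : ℕ => hV.exists_integrable_bound M
  filter_upwards [hcell, ae_all_iff.2 fun M => hτ.hasErgodicMean (hgi M)] with ω hcell hgω
  refine ⟨hcell, fun M => ⟨g ⌈M⌉₊, fun b hb ω r hr => ?_, _, hgω ⌈M⌉₊⟩⟩
  exact hg _ b hb ω r (hr.trans (Nat.le_ceil M))

lemma sum_latticeBoundary_le {ε γ : ℝ} {k : ℕ} {l r : Fin d → ℝ} {a : Zd d → ℝ} (ha : ∀ z, 0 ≤ a z)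
    (hε : 0 < ε) (hγ : ε * k ≤ γ) : ∑ z ∈ latticeBoundary k (latticeBox ε l r), a z ≤
      ∑ z ∈ latticeBox ε l r, a z -
        ∑ z ∈ latticeBox ε (fun i => l i + γ) (fun i => r i - γ), a z := by
  have hshrink {y z : Zd d} (hy : ∀ i, |y i| ≤ k)
      (hz : z ∈ latticeBox ε (fun i => l i + γ) (fun i => r i - γ)) : z + y ∈ latticeBox ε l r :=
    add_mem_latticeBox_of_mem_shrink hε (fun i => le_trans (by
      have : |(y i : ℝ)| ≤ k := by exact_mod_cast hy i
      gcongr) hγ) hz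
  rw [le_sub_iff_add_le, ← Finset.sum_union]
  · refine Finset.sum_le_sum_of_subset_of_nonneg ?_ fun z _ _ => ha z
    refine Finset.union_subset (Finset.filter_subset _ _) fun z hz => ?_
    simpa using hshrink (y := 0) (by simp) hz
  · refine Finset.disjoint_left.2 fun z hz hz' => ?_
    obtain ⟨-, y, hy, hyB⟩ := Finset.mem_filter.1 hz
    exact hyB (hshrink hy hz')

lemma HasSpatialMean.eventually_sum_latticeBoundary_le {a : Zd d → ℝ} {m : ℝ}
    (ham : HasSpatialMean a m) (ha : ∀ z, 0 ≤ a z) (k : ℕ) {l r : Fin d → ℝ}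
    (hlr : ∀ i, l i < r i) {η : ℝ} (hη : 0 < η) :
    ∀ᶠ ε in 𝓝[>] (0 : ℝ), ε ^ d * ∑ z ∈ latticeBoundary k (latticeBox ε l r), a z ≤ η := by
  obtain ⟨γ, hγ, hγlr, hvol⟩ := exists_shrink_prod_lt hlr (η := η / (|m| + 1)) (by positivity)
  have hprod : ∏ i, ((r i - γ) - (l i + γ)) ≤ ∏ i, (r i - l i) :=
    Finset.prod_le_prod (fun i _ => sub_nonneg.2 (hγlr i).le) fun i _ => by linarith
  have hlt : (∏ i, (r i - l i)) * m - (∏ i, ((r i - γ) - (l i + γ))) * m < η := by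
    rw [← sub_mul]
    calc _ ≤ ((∏ i, (r i - l i)) - ∏ i, ((r i - γ) - (l i + γ))) * (|m| + 1) :=
          mul_le_mul_of_nonneg_left (by linarith [le_abs_self m]) (sub_nonneg.2 hprod)
      _ < η / (|m| + 1) * (|m| + 1) := by gcongr; linarith
      _ = η := div_mul_cancel₀ _ (by positivity)
  filter_upwards [((ham l r hlr).sub (ham _ _ hγlr)).eventually_le_const hlt,
    eventually_mul_le k hγ, self_mem_nhdsWithin] with ε hsum hεk (hε : 0 < ε)
  rw [← mul_sub] at hsum
  exact (mul_le_mul_of_nonneg_left (sum_latticeBoundary_le ha hε hεk) (by positivity)).trans hsum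

lemma IsTypical.admitsRecovery_of_dist_le (hω : IsTypical P τ E0 V D ω)
    (hV : IsRandomPotential P E0 V) (hτ : IsMeasurePreservingAction P τ) {k : ℕ} (hk : 0 < k)
    (J m : ℕ) {F : Rd d →L[ℝ] Rn n} (hF : F ∈ D)
    (hu : ∀ᶠ ε in 𝓝[>] (0 : ℝ), ∀ z ∈ latticeBox ε I.lower I.upper, ∀ b ∈ E0,
      dist (diffQuot (rescale ε u) z b) (diffQuot (fun y => F (toRd y)) z b) ≤
        1 / ((m : ℝ) + 1)) :
    AdmitsRecovery τ E0 V ω u I ((∏ i, (I.upper i - I.lower i)) *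
      (((k : ℝ) ^ d)⁻¹ * ∫ ω, relaxedCellMin τ E0 V k J (1 / ((m : ℝ) + 1)) F ω ∂P)) := by
  intro A' hA'
  set δ := 1 / ((m : ℝ) + 1)
  have hδ : 0 ≤ δ := by positivity
  obtain ⟨g, hg, mg, hgω⟩ := hω.exists_bound (‖F‖ + δ)
  choose C hC using fun j : Fin (J + 1) => (Corrector.denseSeq n E0 k j).exists_norm_le
  have hC' (j : Fin (J + 1)) (z : Zd d) : ‖(Corrector.denseSeq n E0 k j).1 z‖ ≤
      Finset.univ.sup' Finset.univ_nonempty C :=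
    (hC j z).trans (Finset.le_sup' C (Finset.mem_univ j))
  obtain ⟨A'', hA, hA''⟩ := exists_between hA'
  rw [mul_left_comm] at hA
  refine ⟨Finset.univ.sup' Finset.univ_nonempty C, ?_⟩
  filter_upwards [hu, self_mem_nhdsWithin,
    ((hω.hasSpatialMean_relaxedCellMin k J m F hF _ _ I.lower_lt_upper).const_mul
      ((k : ℝ) ^ d)⁻¹).eventually_le_const hA,
    (hgω.const_mul E0.card).eventually_sum_latticeBoundary_le
      (fun z => hV.card_mul_bound_nonneg (by positivity) hg (τ z ω)) k I.lower_lt_upper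
      (sub_pos.2 hA'')] with ε hu (hε : 0 < ε) hcell hbdry
  obtain ⟨w, hw, hle⟩ := hV.exists_tiling hτ hk J hC' hδ hg hu
  refine ⟨w, hw, (mul_le_mul_of_nonneg_left hle (by positivity)).trans ?_⟩
  rw [mul_add, mul_left_comm]
  linarith

end LocalRecovery

section Gluing

variable {P : Measure Ω} {τ : Zd d → Ω → Ω} {E0 : Finset (Zd d)} {V : Zd d → Ω → Rn n → ℝ}
  {D : Set (Rd d →L[ℝ] Rn n)} {ω : Ω} {u : Rd d → Rn n} {I : BoxIntegral.Box (Fin d)}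

lemma IsLocalPerturbation.sum {ι : Type*} [Fintype ι] {B : ι → Finset (Zd d)} {C : ι → ℝ}
    {w : ι → Zd d → Rn n} (hw : ∀ s, IsLocalPerturbation E0 (B s) (C s) (w s)) :
    IsLocalPerturbation E0 (Finset.univ.biUnion B) (∑ s, C s) fun z => ∑ s, w s z where
  norm_le z := norm_sum_le_of_le _ fun s _ => (hw s).norm_le z
  apply_eq_zero z hz := Finset.sum_eq_zero fun s hs => (hw s).apply_eq_zero z fun h =>
    hz (Finset.mem_biUnion.2 ⟨s, hs, h⟩)
  apply_add_eq_zero z hz b hb := Finset.sum_eq_zero fun s hs => (hw s).apply_add_eq_zero z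
    (fun h => hz (Finset.mem_biUnion.2 ⟨s, hs, h⟩)) b hb

lemma latticeEnergy_add_sum {ι : Type*} [Fintype ι] {B : ι → Finset (Zd d)}
    (hB : Pairwise (Function.onFun Disjoint B)) {C : ι → ℝ} {w : ι → Zd d → Rn n}
    (hw : ∀ s, IsLocalPerturbation E0 (B s) (C s) (w s)) (v : Zd d → Zd d → Rn n → ℝ)
    (u : Zd d → Rn n) :
    latticeEnergy E0 v (fun z => u z + ∑ s, w s z) (Finset.univ.biUnion B) =
      ∑ s, latticeEnergy E0 v (fun z => u z + w s z) (B s) := by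
  rw [latticeEnergy, Finset.sum_biUnion fun s _ t _ hst => hB hst]
  refine Finset.sum_congr rfl fun s _ => Finset.sum_congr rfl fun z hz =>
    Finset.sum_congr rfl fun b hb => ?_
  have hz' (t) (hts : t ≠ s) : z ∉ B t := Finset.disjoint_right.1 (hB hts) hz
  have h0 : ∑ t, w t z = w s z :=
    Fintype.sum_eq_single s fun t hts => (hw t).apply_eq_zero z (hz' t hts)
  have h1 : ∑ t, w t (z + b) = w s (z + b) :=
    Fintype.sum_eq_single s fun t hts => (hw t).apply_add_eq_zero z (hz' t hts) b hb
  simp only [diffQuot, h0, h1]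

lemma mem_latticeBox_box {ε : ℝ} (hε : 0 < ε) {z : Zd d} :
    z ∈ latticeBox ε I.lower I.upper ↔ (fun i => ε * (z i : ℝ)) ∈ I := by
  rw [mem_latticeBox hε, BoxIntegral.Box.mem_def]
  rfl

lemma disjoint_latticeBox_splitCenterBox (I : BoxIntegral.Box (Fin d)) {ε : ℝ} (hε : 0 < ε) :
    Pairwise (Function.onFun Disjoint fun s =>
      latticeBox ε (I.splitCenterBox s).lower (I.splitCenterBox s).upper) := fun _ _ hst =>
  Finset.disjoint_left.2 fun _ hz hz' => Set.disjoint_left.1 (I.disjoint_splitCenterBox hst)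
    ((mem_latticeBox_box hε).1 hz) ((mem_latticeBox_box hε).1 hz')

lemma biUnion_latticeBox_splitCenterBox (I : BoxIntegral.Box (Fin d)) {ε : ℝ} (hε : 0 < ε) :
    (Finset.univ.biUnion fun s =>
      latticeBox ε (I.splitCenterBox s).lower (I.splitCenterBox s).upper) =
        latticeBox ε I.lower I.upper := by
  ext z
  simp only [Finset.mem_biUnion, Finset.mem_univ, true_and, mem_latticeBox_box hε]
  exact BoxIntegral.Box.exists_mem_splitCenterBox

omit [MeasurableSpace Ω] in
lemma admitsRecovery_of_splitCenterBox {A : Set (Fin d) → ℝ}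
    (h : ∀ s, AdmitsRecovery τ E0 V ω u (I.splitCenterBox s) (A s)) :
    AdmitsRecovery τ E0 V ω u I (∑ s, A s) := by
  intro A' hA'
  have hN : 0 < (Fintype.card (Set (Fin d)) : ℝ) := Nat.cast_pos.2 Fintype.card_pos
  have hslack : ∑ s, (A s + (A' - ∑ s, A s) / Fintype.card (Set (Fin d))) = A' := by
    rw [Finset.sum_add_distrib, Finset.sum_const, Finset.card_univ, nsmul_eq_mul,
      mul_div_cancel₀ _ hN.ne']
    ring
  choose C hC using fun s => h s _ (lt_add_of_pos_right (A s) (div_pos (sub_pos.2 hA') hN))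
  refine ⟨∑ s, C s, ?_⟩
  filter_upwards [eventually_all.2 hC, self_mem_nhdsWithin] with ε hε (hε0 : 0 < ε)
  choose w hw hle using hε
  rw [← biUnion_latticeBox_splitCenterBox I hε0]
  refine ⟨_, .sum hw, ?_⟩
  rw [latticeEnergy_add_sum (disjoint_latticeBox_splitCenterBox I hε0) hw, Finset.mul_sum, ← hslack]
  exact Finset.sum_le_sum fun s _ => hle s

lemma toLp_mul_apply (ε : ℝ) (z : Zd d) : WithLp.toLp 2 (fun i => ε * (z i : ℝ)) = ε • toRd z := by
  ext i
  simp

lemma dist_diffQuot_rescale_le {s : Set (Rd d)} (hs : Convex ℝ s)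
    (hdiff : ∀ x ∈ s, DifferentiableAt ℝ u x) {F : Rd d →L[ℝ] Rn n} {δ : ℝ}
    (hF : ∀ x ∈ s, ‖fderiv ℝ u x - F‖ ≤ δ) {ε : ℝ} (hε : 0 < ε) {z b : Zd d} (hb : b ≠ 0)
    (hz : ε • toRd z ∈ s) (hzb : ε • toRd (z + b) ∈ s) :
    dist (diffQuot (rescale ε u) z b) (diffQuot (fun y => F (toRd y)) z b) ≤ δ := by
  have h := hs.norm_image_sub_le_of_norm_fderiv_le' hdiff hF hz hzb
  rw [← smul_sub, toRd_add, add_sub_cancel_left, map_smul, norm_smul, Real.norm_of_nonneg hε.le,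
    ← toRd_add] at h
  have hb0 : 0 < ‖toRd b‖ := norm_pos_iff.2 (toRd_ne_zero hb)
  have hFb : F (toRd (z + b)) - F (toRd z) = F (toRd b) := by
    rw [toRd_add, map_add, add_sub_cancel_left]
  have heq : diffQuot (rescale ε u) z b - diffQuot (fun y => F (toRd y)) z b =
      (ε * ‖toRd b‖)⁻¹ • (u (ε • toRd (z + b)) - u (ε • toRd z) - ε • F (toRd b)) := by
    rw [diffQuot, diffQuot, hFb, rescale, rescale, ← smul_sub, ← smul_sub, mul_inv, mul_comm ε⁻¹,
      mul_smul, smul_sub ε⁻¹ _ (ε • _), inv_smul_smul₀ hε.ne']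
  rw [dist_eq_norm, heq, norm_smul, norm_inv, Real.norm_of_nonneg (by positivity),
    inv_mul_le_iff₀ (by positivity), mul_comm]
  exact h

lemma eventually_dist_diffQuot_rescale_le (hE0 : 0 ∉ E0) {x₀ : Rd d} {ρ : ℝ}
    (hdiff : ∀ x ∈ ball x₀ ρ, DifferentiableAt ℝ u x) {F : Rd d →L[ℝ] Rn n} {δ : ℝ}
    (hF : ∀ x ∈ ball x₀ ρ, ‖fderiv ℝ u x - F‖ ≤ δ)
    (hI : ∀ y ∈ I, WithLp.toLp 2 y ∈ ball x₀ (ρ / 2)) :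
    ∀ᶠ ε in 𝓝[>] (0 : ℝ), ∀ z ∈ latticeBox ε I.lower I.upper, ∀ b ∈ E0,
      dist (diffQuot (rescale ε u) z b) (diffQuot (fun y => F (toRd y)) z b) ≤ δ := by
  obtain ⟨y, hy⟩ := I.nonempty_coe
  have hρ : 0 < ρ / 2 := (dist_nonneg).trans_lt (hI y hy)
  filter_upwards [eventually_mul_le (irange d E0) hρ, self_mem_nhdsWithin] with ε hεR (hε : 0 < ε)
    z hz b hb
  have hx : ε • toRd z ∈ ball x₀ (ρ / 2) := by
    rw [← toLp_mul_apply]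
    exact hI _ ((mem_latticeBox_box hε).1 hz)
  refine dist_diffQuot_rescale_le (convex_ball x₀ ρ) hdiff hF hε (ne_of_mem_of_not_mem hb hE0)
    (ball_subset_ball (by linarith) hx) ?_
  have hb' : dist (ε • toRd (z + b)) (ε • toRd z) ≤ ρ / 2 := by
    rw [dist_eq_norm, ← smul_sub, toRd_add, add_sub_cancel_left, norm_smul,
      Real.norm_of_nonneg hε.le]
    exact (mul_le_mul_of_nonneg_left (norm_toRd_le_irange hb) hε.le).trans hεR
  rw [mem_ball] at hx ⊢
  linarith [dist_triangle (ε • toRd (z + b)) (ε • toRd z) x₀]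

end Gluing

section EnergyBound

variable {P : Measure Ω} {τ : Zd d → Ω → Ω} {E0 : Finset (Zd d)} {V : Zd d → Ω → Rn n → ℝ}
  {D : Set (Rd d →L[ℝ] Rn n)} {ω : Ω} {u : Rd d → Rn n} {I : BoxIntegral.Box (Fin d)}
  {U : Set (Rd d)}

omit [MeasurableSpace Ω] in
lemma AdmitsRecovery.mono {A A' : ℝ} (h : AdmitsRecovery τ E0 V ω u I A) (hA : A ≤ A') :
    AdmitsRecovery τ E0 V ω u I A' := fun _ hA' => h _ (hA.trans_lt hA')

omit [MeasurableSpace Ω] in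
lemma AdmitsRecovery.of_forall_gt {A : ℝ} (h : ∀ A' > A, AdmitsRecovery τ E0 V ω u I A') :
    AdmitsRecovery τ E0 V ω u I A := fun A' hA' => by
  obtain ⟨A'', hA, hA''⟩ := exists_between hA'
  exact h A'' hA A' hA''

lemma integral_box_eq_sum_splitCenterBox {f : (Fin d → ℝ) → ℝ}
    (hf : IntegrableOn f (I : Set (Fin d → ℝ))) : ∫ x in (I : Set (Fin d → ℝ)), f x =
      ∑ s, ∫ x in (I.splitCenterBox s : Set (Fin d → ℝ)), f x := by
  rw [← I.iUnion_coe_splitCenterBox, integral_iUnion_fintype]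
  · exact fun s => BoxIntegral.Box.measurableSet_coe _
  · exact fun s t hst => I.disjoint_splitCenterBox hst
  · exact fun s => hf.mono_set (I.splitCenterBox_le s)

lemma prod_sub_mul_le_setIntegral {c : ℝ} {f : (Fin d → ℝ) → ℝ}
    (hf : IntegrableOn f (I : Set (Fin d → ℝ))) (hcf : ∀ᵐ x ∂volume.restrict I, c ≤ f x) :
    (∏ i, (I.upper i - I.lower i)) * c ≤ ∫ x in (I : Set (Fin d → ℝ)), f x := by
  have hvol : volume.real (I : Set (Fin d → ℝ)) = ∏ i, (I.upper i - I.lower i) := by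
    rw [measureReal_def, BoxIntegral.Box.coe_eq_pi, Real.volume_pi_Ioc_toReal I.lower_le_upper]
  rw [← hvol, ← smul_eq_mul, ← setIntegral_const]
  exact setIntegral_mono_ae_restrict
    (integrableOn_const (BoxIntegral.Box.measure_coe_lt_top I volume).ne) hf hcf

omit [MeasurableSpace Ω] in
lemma admitsRecovery_setIntegral_of_local {f : (Fin d → ℝ) → ℝ}
    (hf : IntegrableOn f (I : Set (Fin d → ℝ)))
    (hloc : ∀ x ∈ BoxIntegral.Box.Icc I, ∃ s ∈ 𝓝 x, ∀ J ≤ I, (J : Set (Fin d → ℝ)) ⊆ s →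
      AdmitsRecovery τ E0 V ω u J (∫ x in (J : Set (Fin d → ℝ)), f x)) :
    AdmitsRecovery τ E0 V ω u I (∫ x in (I : Set (Fin d → ℝ)), f x) := by
  refine BoxIntegral.Box.subbox_induction_on' (p := fun J => J ≤ I →
    AdmitsRecovery τ E0 V ω u J (∫ x in (J : Set (Fin d → ℝ)), f x)) I ?_ ?_ le_rfl
  · intro J _ hJs hJ
    rw [integral_box_eq_sum_splitCenterBox (hf.mono_set hJ)]
    exact admitsRecovery_of_splitCenterBox fun s => hJs s ((J.splitCenterBox_le s).trans hJ)
  · intro x hx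
    obtain ⟨s, hs, hsJ⟩ := hloc x hx
    exact ⟨s, mem_nhdsWithin_of_mem_nhds hs, fun J _ _ _ hJs _ hJ =>
      hsJ J hJ (BoxIntegral.Box.coe_subset_Icc.trans hJs)⟩

lemma IsTypical.exists_nhds_admitsRecovery (hω : IsTypical P τ E0 V D ω)
    (hV : IsRandomPotential P E0 V) (hτ : IsMeasurePreservingAction P τ) (hD : Dense D)
    (hE0 : 0 ∉ E0) {x : Fin d → ℝ} (hu : ContDiffAt ℝ 1 u (WithLp.toLp 2 x)) {c : ℝ}
    (hc : W0 P τ E0 V (fderiv ℝ u (WithLp.toLp 2 x)) < c) :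
    ∃ s ∈ 𝓝 x, ∀ J : BoxIntegral.Box (Fin d), (J : Set (Fin d → ℝ)) ⊆ s →
      AdmitsRecovery τ E0 V ω u J ((∏ i, (J.upper i - J.lower i)) * c) := by
  obtain ⟨k, N, m, F, hFD, hk, hF, hcell⟩ := hV.exists_integral_relaxedCellMin_lt hτ hD hc
  have hcont : ContinuousAt (fun y => ‖fderiv ℝ u y - F‖) (WithLp.toLp 2 x) :=
    ((hu.continuousAt_fderiv one_ne_zero).sub continuousAt_const).norm
  obtain ⟨ρ, hρ, hball⟩ := Metric.eventually_nhds_iff_ball.1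
    ((hu.eventually (by simp)).and (hcont.eventually_lt continuousAt_const hF))
  refine ⟨{y | WithLp.toLp 2 y ∈ ball (WithLp.toLp 2 x) (ρ / 2)},
    (PiLp.continuous_toLp 2 _).continuousAt.preimage_mem_nhds (ball_mem_nhds _ (half_pos hρ)),
    fun J hJ => (hω.admitsRecovery_of_dist_le hV hτ hk N m hFD ?_).mono ?_⟩
  · exact eventually_dist_diffQuot_rescale_le hE0
      (fun y hy => (hball y hy).1.differentiableAt one_ne_zero) (fun y hy => (hball y hy).2.le) hJ
  · exact mul_le_mul_of_nonneg_left hcell.le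
      (Finset.prod_nonneg fun i _ => sub_nonneg.2 (J.lower_le_upper i))

lemma IsRandomPotential.integrableOn_W0_fderiv [IsProbabilityMeasure P]
    (hV : IsRandomPotential P E0 V) (hτ : IsMeasurePreservingAction P τ)
    (hu : ∀ x ∈ BoxIntegral.Box.Icc I, ContDiffAt ℝ 1 u (WithLp.toLp 2 x)) :
    IntegrableOn (fun x => W0 P τ E0 V (fderiv ℝ u (WithLp.toLp 2 x)))
      (BoxIntegral.Box.Icc I) := by
  have hcont : Continuous fun x : Fin d → ℝ => (WithLp.toLp 2 x : Rd d) :=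
    PiLp.continuous_toLp 2 _
  have hDu : ContinuousOn (fun x => fderiv ℝ u (WithLp.toLp 2 x)) (BoxIntegral.Box.Icc I) :=
    fun x hx => (ContinuousAt.comp (f := fun x : Fin d → ℝ => (WithLp.toLp 2 x : Rd d))
      ((hu x hx).continuousAt_fderiv one_ne_zero) hcont.continuousAt).continuousWithinAt
  obtain ⟨M, hM⟩ := (BoxIntegral.Box.isCompact_Icc I).exists_bound_of_continuousOn hDu
  obtain ⟨C, hC⟩ := hV.exists_W0_le hτ M
  refine IntegrableOn.of_bound (BoxIntegral.Box.measure_Icc_lt_top I volume)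
    ((hV.measurable_W0 hτ).comp
      ((measurable_fderiv ℝ u).comp hcont.measurable)).aestronglyMeasurable C ?_
  filter_upwards [ae_restrict_mem (BoxIntegral.Box.measurableSet_Icc I)] with x hx
  rw [Real.norm_of_nonneg (hV.W0_nonneg _)]
  exact hC _ (hM x hx)

/-- `W0` is only known to be measurable, so the local bounds are glued with a lower semicontinuous
majorant of `W0 ∘ Du` in place of `W0 ∘ Du` itself. -/
lemma IsTypical.admitsRecovery [IsProbabilityMeasure P] (hω : IsTypical P τ E0 V D ω)
    (hV : IsRandomPotential P E0 V) (hτ : IsMeasurePreservingAction P τ) (hD : Dense D)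
    (hE0 : 0 ∉ E0) (hu : ∀ x ∈ BoxIntegral.Box.Icc I, ContDiffAt ℝ 1 u (WithLp.toLp 2 x)) :
    AdmitsRecovery τ E0 V ω u I
      (∫ x in BoxIntegral.Box.Icc I, W0 P τ E0 V (fderiv ℝ u (WithLp.toLp 2 x))) := by
  refine AdmitsRecovery.of_forall_gt fun A' hA' => ?_
  set h : (Fin d → ℝ) → ℝ := fun x => W0 P τ E0 V (fderiv ℝ u (WithLp.toLp 2 x))
  have hh (x) : ((h x).toNNReal : ℝ) = h x := Real.coe_toNNReal _ (hV.W0_nonneg _)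
  have hint : IntegrableOn (fun x => ((h x).toNNReal : ℝ)) (BoxIntegral.Box.Icc I) := by
    simpa only [hh] using hV.integrableOn_W0_fderiv hτ hu
  obtain ⟨G, hhG, hGlsc, hGtop, hGint, hGA⟩ :=
    exists_lt_lowerSemicontinuous_integral_gt_nnreal (fun x => (h x).toNNReal) hint
      (sub_pos.2 hA')
  simp only [hh, add_sub_cancel] at hGA
  rw [← setIntegral_congr_set (BoxIntegral.Box.coe_ae_eq_Icc I)] at hGA
  have hGint' : IntegrableOn (fun x => (G x).toReal) (I : Set (Fin d → ℝ)) :=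
    IntegrableOn.mono_set hGint BoxIntegral.Box.coe_subset_Icc
  refine (admitsRecovery_setIntegral_of_local hGint' fun x hx => ?_).mono hGA.le
  obtain ⟨c, hxc, hcG⟩ := ENNReal.lt_iff_exists_nnreal_btwn.1 (hhG x)
  have hWc : W0 P τ E0 V (fderiv ℝ u (WithLp.toLp 2 x)) < c :=
    (hh x).symm.trans_lt (NNReal.coe_lt_coe.2 (ENNReal.coe_lt_coe.1 hxc))
  obtain ⟨s, hs, hsJ⟩ := hω.exists_nhds_admitsRecovery hV hτ hD hE0 (hu x hx) hWc
  refine ⟨s ∩ {y | (c : ℝ≥0∞) < G y}, inter_mem hs (hGlsc x c hcG), fun J hJ hJs =>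
    (hsJ J (hJs.trans inter_subset_left)).mono
      (prod_sub_mul_le_setIntegral (hGint'.mono_set hJ) ?_)⟩
  filter_upwards [ae_restrict_mem (BoxIntegral.Box.measurableSet_coe J),
    ae_restrict_of_ae_restrict_of_subset
      ((BoxIntegral.Box.coe_subset_coe.2 hJ).trans BoxIntegral.Box.coe_subset_Icc) hGtop]
    with y hy hytop
  simpa only [ENNReal.coe_toReal] using ENNReal.toReal_mono hytop.ne (hJs hy).2.le

end EnergyBound

section EnergyRaising

lemma exists_norm_eq_one_forall_le_norm_sub {E : Type*} [NormedAddCommGroup E] [NormedSpace ℝ E]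
    [Nontrivial E] (x : E) : ∃ e : E, ‖e‖ = 1 ∧ ∀ t : ℝ, 0 ≤ t → t ≤ ‖x - t • e‖ := by
  obtain rfl | hx := eq_or_ne x 0
  · obtain ⟨e, he⟩ := exists_norm_eq E zero_le_one
    exact ⟨e, he, fun t ht => by simp [norm_smul, he, abs_of_nonneg ht]⟩
  · have hx' : 0 < ‖x‖ := norm_pos_iff.2 hx
    refine ⟨-(‖x‖⁻¹ • x), by
      rw [norm_neg, norm_smul, norm_inv, norm_norm, inv_mul_cancel₀ hx'.ne'], fun t ht => ?_⟩
    have h : x - t • -(‖x‖⁻¹ • x) = (1 + t * ‖x‖⁻¹) • x := by module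
    rw [h, norm_smul, Real.norm_of_nonneg (by positivity), add_mul, inv_mul_cancel_right₀ hx'.ne']
    linarith

lemma rpow_add_le {x y q : ℝ} (hx : 0 ≤ x) (hy : 0 ≤ y) (hq : 0 ≤ q) :
    (x + y) ^ q ≤ 2 ^ q * (x ^ q + y ^ q) := by
  have hmax : 0 ≤ max x y := hx.trans (le_max_left x y)
  calc (x + y) ^ q ≤ (2 * max x y) ^ q := by
        refine Real.rpow_le_rpow (by positivity) ?_ hq
        linarith [le_max_left x y, le_max_right x y]
    _ = 2 ^ q * max x y ^ q := Real.mul_rpow zero_le_two hmax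
    _ ≤ 2 ^ q * (x ^ q + y ^ q) := by
        refine mul_le_mul_of_nonneg_left ?_ (by positivity)
        have := Real.rpow_nonneg hx q
        have := Real.rpow_nonneg hy q
        rcases max_choice x y with h | h <;> rw [h] <;> linarith

lemma rpow_le_one_add_rpow {x p q : ℝ} (hx : 0 ≤ x) (hq : 0 ≤ q) (hqp : q ≤ p) :
    x ^ q ≤ 1 + x ^ p := by
  rcases le_total x 1 with h | h
  · linarith [Real.rpow_le_one hx h hq, Real.rpow_nonneg hx p]
  · linarith [Real.rpow_le_rpow_of_exponent_le h hqp]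

lemma sum_norm_update_rpow_le {ι E : Type*} [DecidableEq ι] [NormedAddCommGroup E]
    (S : Finset ι) (i : ι) {w : ι → E} {C : ℝ} (hw : ∀ j, ‖w j‖ ≤ C) (y : E) {q : ℝ}
    (hq : 0 ≤ q) : ∑ j ∈ S, ‖Function.update w i y j‖ ^ q ≤ S.card * C ^ q + ‖y‖ ^ q := by
  calc ∑ j ∈ S, ‖Function.update w i y j‖ ^ q
      ≤ ∑ j ∈ S, (C ^ q + if j = i then ‖y‖ ^ q else 0) := Finset.sum_le_sum fun j _ => by
        have hC : 0 ≤ C := (norm_nonneg _).trans (hw j)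
        split_ifs with h
        · rw [h, Function.update_self]
          exact le_add_of_nonneg_left (by positivity)
        · rw [Function.update_of_ne h, add_zero]
          exact Real.rpow_le_rpow (norm_nonneg _) (hw j) hq
    _ ≤ S.card * C ^ q + ‖y‖ ^ q := by
        rw [Finset.sum_add_distrib, Finset.sum_const, nsmul_eq_mul, Finset.sum_ite_eq']
        gcongr
        split_ifs
        exacts [le_rfl, by positivity]

variable {E0 : Finset (Zd d)} {v : Zd d → Zd d → Rn n → ℝ} {u : Zd d → Rn n} {B : Finset (Zd d)}
  {z b : Zd d} {κ p C A : ℝ}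

lemma continuous_latticeEnergy (hv : ∀ z, ∀ b ∈ E0, Continuous (v z b)) :
    Continuous fun u : Zd d → Rn n => latticeEnergy E0 v u B :=
  continuous_finsetSum _ fun z _ => continuous_finsetSum _ fun b hb => (hv z b hb).comp <| by
    unfold diffQuot
    fun_prop

lemma le_latticeEnergy (hv : ∀ z, ∀ b ∈ E0, ∀ r, 0 ≤ v z b r) (hz : z ∈ B) (hb : b ∈ E0) :
    v z b (diffQuot u z b) ≤ latticeEnergy E0 v u B :=
  (Finset.single_le_sum (f := fun b => v z b (diffQuot u z b)) (fun b hb => hv z b hb _) hb).trans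
    (Finset.single_le_sum (f := fun z => ∑ b ∈ E0, v z b (diffQuot u z b))
      (fun z _ => Finset.sum_nonneg fun b hb => hv z b hb _) hz)

lemma norm_diffQuot_update (hb : b ≠ 0) (u : Zd d → Rn n) (z : Zd d) (y : Rn n) :
    ‖diffQuot (Function.update u z (u z + y)) z b‖ = ‖toRd b‖⁻¹ * ‖u (z + b) - u z - y‖ := by
  rw [diffQuot, Function.update_self, Function.update_of_ne (by simpa using hb), ← sub_sub,
    norm_smul, norm_inv, norm_norm]

/-- The energy tends to infinity continuously as the value of `u` at a site with a coercive edge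
does, so it attains every larger value. -/
lemma exists_latticeEnergy_update_eq [Nontrivial (Rn n)]
    (hvc : ∀ z, ∀ b ∈ E0, Continuous (v z b)) (hv : ∀ z, ∀ b ∈ E0, ∀ r, 0 ≤ v z b r)
    (hz : z ∈ B) (hb : b ∈ E0) (hb0 : b ≠ 0) (hκ : 0 < κ) (hp : 0 < p)
    (hlow : ∀ r, κ * ‖r‖ ^ p ≤ v z b r + C) (hA : latticeEnergy E0 v u B ≤ A) :
    ∃ y : Rn n, ‖y‖ ^ p ≤ ‖toRd b‖ ^ p * ((A + C) / κ) ∧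
      latticeEnergy E0 v (Function.update u z (u z + y)) B = A := by
  have hbpos : 0 < ‖toRd b‖ := norm_pos_iff.2 (toRd_ne_zero hb0)
  have hAC : 0 ≤ (A + C) / κ := div_nonneg (le_trans (by positivity) ((hlow _).trans
    (add_le_add_left ((le_latticeEnergy hv hz hb).trans hA) C))) hκ.le
  set s := ((A + C) / κ) ^ p⁻¹
  have hs : 0 ≤ s := Real.rpow_nonneg hAC _
  have hsp : s ^ p = (A + C) / κ := Real.rpow_inv_rpow hAC hp.ne'
  obtain ⟨e, he, hte⟩ := exists_norm_eq_one_forall_le_norm_sub (u (z + b) - u z)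
  set raised : ℝ → Zd d → Rn n := fun t => Function.update u z (u z + t • e)
  have hcont : Continuous fun t => latticeEnergy E0 v (raised t) B :=
    (continuous_latticeEnergy hvc).comp (continuous_const.update z (by fun_prop))
  have hle : latticeEnergy E0 v (raised 0) B ≤ A := by simpa [raised] using hA
  have hge : A ≤ latticeEnergy E0 v (raised (‖toRd b‖ * s)) B := by
    have hquot : s ≤ ‖diffQuot (raised (‖toRd b‖ * s)) z b‖ := by
      rw [norm_diffQuot_update hb0, le_inv_mul_iff₀ hbpos]
      exact hte _ (by positivity)
    have hAκ : A + C ≤ κ * ‖diffQuot (raised (‖toRd b‖ * s)) z b‖ ^ p := by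
      rw [← div_le_iff₀' hκ, ← hsp]
      exact Real.rpow_le_rpow hs hquot hp.le
    linarith [hlow (diffQuot (raised (‖toRd b‖ * s)) z b),
      le_latticeEnergy (u := raised (‖toRd b‖ * s)) hv hz hb]
  obtain ⟨t, ⟨ht0, hts⟩, ht⟩ := intermediate_value_Icc (by positivity : 0 ≤ ‖toRd b‖ * s)
    hcont.continuousOn ⟨hle, hge⟩
  refine ⟨t • e, ?_, ht⟩
  rw [norm_smul, he, mul_one, Real.norm_of_nonneg ht0, ← hsp, ← Real.mul_rpow hbpos.le hs]
  exact Real.rpow_le_rpow ht0 hts hp.le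

/-- A bound for the `L^q` size of the final perturbation on `N` sites of `εℤ^d`: `ε C₀` at all
sites, plus at one site the jump from `exists_latticeEnergy_update_eq` along an edge of length `ℓ`
to the energy `ε⁻ᵈ A`. -/
def recoveryError (d N : ℕ) (p q κ C A ℓ C₀ ε : ℝ) : ℝ :=
  ε ^ d * N * (ε * C₀) ^ q +
    (ε ^ d + ε ^ p * (2 ^ p * (ε ^ d * C₀ ^ p + ℓ ^ p * ((A + ε ^ d * C) / κ))))

lemma tendsto_recoveryError (hd : d ≠ 0) (I : BoxIntegral.Box (Fin d)) {q : ℝ} (hp : 0 < p)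
    (hq : 0 < q) (κ C A ℓ C₀ : ℝ) : Tendsto (fun ε => recoveryError d
      (latticeBox ε I.lower I.upper).card p q κ C A ℓ C₀ ε) (𝓝[>] 0) (𝓝 0) := by
  have hid : Tendsto (fun ε : ℝ => ε) (𝓝[>] 0) (𝓝 0) := tendsto_id.mono_left nhdsWithin_le_nhds
  have hεd : Tendsto (fun ε : ℝ => ε ^ d) (𝓝[>] 0) (𝓝 0) := by
    simpa only [zero_pow hd] using hid.pow d
  have hεp : Tendsto (fun ε : ℝ => ε ^ p) (𝓝[>] 0) (𝓝 0) := by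
    simpa only [Real.zero_rpow hp.ne'] using hid.rpow_const (p := p) (Or.inr hp.le)
  have hεq : Tendsto (fun ε : ℝ => (ε * C₀) ^ q) (𝓝[>] 0) (𝓝 0) := by
    simpa only [zero_mul, Real.zero_rpow hq.ne'] using
      (hid.mul_const C₀).rpow_const (p := q) (Or.inr hq.le)
  have hjump := hεp.mul (((hεd.mul_const (C₀ ^ p)).add
    ((((hεd.mul_const C).const_add A).div_const κ).const_mul (ℓ ^ p))).const_mul (2 ^ p))
  simpa only [recoveryError, mul_zero, zero_mul, add_zero] using
    ((tendsto_card_latticeBox I.lower_le_upper).mul hεq).add (hεd.add hjump)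

lemma sum_norm_smul_update_rpow_le_recoveryError {w : Zd d → Rn n} {C₀ : ℝ} (hw : ∀ x, ‖w x‖ ≤ C₀)
    {ε q ℓ : ℝ} (hε : 0 < ε) (hq : 0 ≤ q) (hqp : q ≤ p) {y : Rn n}
    (hy : ‖y‖ ^ p ≤ ℓ ^ p * (((ε ^ d)⁻¹ * A + C) / κ)) :
    ε ^ d * ∑ x ∈ B, ‖ε • Function.update w z (w z + y) x‖ ^ q ≤
      recoveryError d B.card p q κ C A ℓ C₀ ε := by
  have hp : 0 ≤ p := hq.trans hqp
  have hC₀ : 0 ≤ C₀ := (norm_nonneg _).trans (hw z)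
  have hjump : (ε * ‖w z + y‖) ^ q ≤ 1 + ε ^ p * (2 ^ p * (C₀ ^ p + ‖y‖ ^ p)) :=
    calc (ε * ‖w z + y‖) ^ q ≤ 1 + (ε * ‖w z + y‖) ^ p :=
          rpow_le_one_add_rpow (by positivity) hq hqp
      _ ≤ 1 + (ε * (C₀ + ‖y‖)) ^ p := by
          gcongr
          exact norm_add_le_of_le (hw z) le_rfl
      _ ≤ 1 + ε ^ p * (2 ^ p * (C₀ ^ p + ‖y‖ ^ p)) := by
          rw [Real.mul_rpow hε.le (by positivity)]
          gcongr
          exact rpow_add_le hC₀ (norm_nonneg y) hp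
  have hyε : ε ^ d * ‖y‖ ^ p ≤ ℓ ^ p * ((A + ε ^ d * C) / κ) :=
    (mul_le_mul_of_nonneg_left hy (by positivity)).trans_eq (by field_simp)
  calc ε ^ d * ∑ x ∈ B, ‖ε • Function.update w z (w z + y) x‖ ^ q
      = ε ^ d * (ε ^ q * ∑ x ∈ B, ‖Function.update w z (w z + y) x‖ ^ q) := by
        simp only [norm_smul, Real.norm_of_nonneg hε.le, Real.mul_rpow hε.le (norm_nonneg _),
          Finset.mul_sum]
    _ ≤ ε ^ d * (ε ^ q * (B.card * C₀ ^ q + ‖w z + y‖ ^ q)) := by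
        gcongr
        exact sum_norm_update_rpow_le B z hw _ hq
    _ = ε ^ d * B.card * (ε * C₀) ^ q + ε ^ d * (ε * ‖w z + y‖) ^ q := by
        rw [Real.mul_rpow hε.le hC₀, Real.mul_rpow hε.le (norm_nonneg _)]
        ring
    _ ≤ ε ^ d * B.card * (ε * C₀) ^ q +
          ε ^ d * (1 + ε ^ p * (2 ^ p * (C₀ ^ p + ‖y‖ ^ p))) := by gcongr
    _ = ε ^ d * B.card * (ε * C₀) ^ q +
          (ε ^ d + ε ^ p * (2 ^ p * (ε ^ d * C₀ ^ p + ε ^ d * ‖y‖ ^ p))) := by ring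
    _ ≤ recoveryError d B.card p q κ C A ℓ C₀ ε := by
        unfold recoveryError
        gcongr

lemma recoveryError_mono {N N' : ℕ} (hN : N ≤ N') {q ℓ C₀ ε : ℝ} (hC₀ : 0 ≤ C₀)
    (hε : 0 ≤ ε) : recoveryError d N p q κ C A ℓ C₀ ε ≤ recoveryError d N' p q κ C A ℓ C₀ ε := by
  unfold recoveryError
  gcongr

lemma exists_scaled_latticeEnergy_near [Nontrivial (Rn n)]
    (hvc : ∀ z, ∀ b ∈ E0, Continuous (v z b)) (hv : ∀ z, ∀ b ∈ E0, ∀ r, 0 ≤ v z b r)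
    (hz : z ∈ B) (hb : b ∈ E0) (hb0 : b ≠ 0) (hκ : 0 < κ) (hp : 0 < p) (hC : 0 ≤ C) (hA : 0 ≤ A)
    (hlow : ∀ r, κ * ‖r‖ ^ p ≤ v z b r + C) {w : Zd d → Rn n} {C₀ : ℝ} (hw : ∀ x, ‖w x‖ ≤ C₀)
    {ε η q : ℝ} (hε : 0 < ε) (hη : 0 ≤ η) (hq : 0 ≤ q) (hqp : q ≤ p)
    (hle : ε ^ d * latticeEnergy E0 v (fun x => u x + w x) B ≤ A + η) :
    ∃ w' : Zd d → Rn n,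
      ε ^ d * ∑ x ∈ B, ‖ε • w' x‖ ^ q ≤ recoveryError d B.card p q κ C A ‖toRd b‖ C₀ ε ∧
      |ε ^ d * latticeEnergy E0 v (fun x => u x + w' x) B - A| ≤ η := by
  suffices ∃ y : Rn n, ‖y‖ ^ p ≤ ‖toRd b‖ ^ p * (((ε ^ d)⁻¹ * A + C) / κ) ∧
      |ε ^ d * latticeEnergy E0 v (Function.update (fun x => u x + w x) z (u z + w z + y)) B - A|
        ≤ η by
    obtain ⟨y, hy, hyA⟩ := this
    refine ⟨_, sum_norm_smul_update_rpow_le_recoveryError (z := z) hw hε hq hqp hy, ?_⟩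
    convert hyA using 5
    ext1 x
    obtain rfl | hx := eq_or_ne x z
    · simp [add_assoc]
    · simp [hx]
  obtain h | h := le_total A (ε ^ d * latticeEnergy E0 v (fun x => u x + w x) B)
  · refine ⟨0, ?_, ?_⟩
    · rw [norm_zero, Real.zero_rpow hp.ne']
      positivity
    · rw [add_zero, Function.update_eq_self]
      exact abs_le.2 ⟨by linarith, by linarith⟩
  · obtain ⟨y, hy, hyA⟩ := exists_latticeEnergy_update_eq hvc hv hz hb hb0 hκ hp hlow
      (show latticeEnergy E0 v (fun x => u x + w x) B ≤ (ε ^ d)⁻¹ * A by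
        rwa [le_inv_mul_iff₀ (by positivity)])
    refine ⟨y, hy, ?_⟩
    rwa [hyA, mul_inv_cancel_left₀ (by positivity), sub_self, abs_zero]

end EnergyRaising

section Recovery

/-- The sites `z` with `εz` in the open box `∏ (aᵢ, bᵢ)`. -/
def openLatticeBox (ε : ℝ) (a b : Fin d → ℝ) : Finset (Zd d) :=
  (latticeBox ε a b).filter fun z => ε • toRd z ∈ openBox a b

lemma mem_openLatticeBox {ε : ℝ} (hε : 0 < ε) {a b : Fin d → ℝ} {z : Zd d} :
    z ∈ openLatticeBox ε a b ↔ ε • toRd z ∈ openBox a b := by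
  refine ⟨fun h => (Finset.mem_filter.1 h).2, fun h => Finset.mem_filter.2 ⟨?_, h⟩⟩
  rw [mem_latticeBox hε]
  exact fun i => (h i).imp (by simp) fun hi => by simpa using hi.le

lemma openLatticeBox_subset (ε : ℝ) (a b : Fin d → ℝ) :
    openLatticeBox ε a b ⊆ latticeBox ε a b := Finset.filter_subset _ _

lemma tsum_ite_mem_openBox {ε : ℝ} (hε : 0 < ε) (a b : Fin d → ℝ) (f : Zd d → ℝ) :
    ∑' z, (if ε • toRd z ∈ openBox a b then f z else 0) = ∑ z ∈ openLatticeBox ε a b, f z := by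
  simp only [← mem_openLatticeBox hε]
  rw [tsum_eq_sum (s := openLatticeBox ε a b) fun z hz => if_neg hz]
  exact Finset.sum_congr rfl fun z hz => if_pos hz

omit [MeasurableSpace Ω] in
lemma energyE_smul {ε : ℝ} (hε : 0 < ε) (τ : Zd d → Ω → Ω) (E0 : Finset (Zd d))
    (V : Zd d → Ω → Rn n → ℝ) (ω : Ω) (v : Zd d → Rn n) (a b : Fin d → ℝ) :
    energyE τ E0 V ε ω (fun z => ε • v z) (openBox a b) =
      ε ^ d * latticeEnergy E0 (environment τ V ω) v (openLatticeBox ε a b) := by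
  rw [energyE, tsum_ite_mem_openBox hε]
  simp only [latticeEnergy, environment, diffQuot, ← smul_sub, smul_smul, mul_inv_rev,
    inv_mul_cancel_right₀ hε.ne']

lemma smul_rescale {ε : ℝ} (hε : ε ≠ 0) (u : Rd d → Rn n) (z : Zd d) :
    ε • rescale ε u z = u (ε • toRd z) := smul_inv_smul₀ hε _

lemma HasSpatialMean.eventually_exists_mem_openLatticeBox {f : Zd d → ℝ} {m : ℝ}
    (hf : HasSpatialMean f m) (hm : m ≠ 0) {a b : Fin d → ℝ} (hab : ∀ i, a i < b i) :
    ∀ᶠ ε in 𝓝[>] (0 : ℝ), ∃ z ∈ openLatticeBox ε a b, f z ≠ 0 := by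
  have hmid : ∀ i, a i < (a i + b i) / 2 := fun i => by linarith [hab i]
  have hne : (∏ i, ((a i + b i) / 2 - a i)) * m ≠ 0 :=
    mul_ne_zero (Finset.prod_ne_zero_iff.2 fun i _ => (sub_pos.2 (hmid i)).ne') hm
  filter_upwards [(hf a (fun i => (a i + b i) / 2) hmid).eventually_ne hne, self_mem_nhdsWithin]
    with ε hsum (hε : 0 < ε)
  obtain ⟨z, hz, hfz⟩ := Finset.exists_ne_zero_of_sum_ne_zero (right_ne_zero_of_mul hsum)
  refine ⟨z, (mem_openLatticeBox hε).2 fun i => ?_, hfz⟩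
  have := (mem_latticeBox hε).1 hz i
  simp only [PiLp.smul_apply, toRd_apply, smul_eq_mul]
  constructor <;> linarith [hab i]

lemma exists_tendsto_zero_of_forall_eventually_exists_le {α : Type*} [Nonempty α] {J : ℝ → α → ℝ}
    (hJ : ∀ ε v, 0 < ε → 0 ≤ J ε v)
    (h : ∀ η > 0, ∀ᶠ ε in 𝓝[>] (0 : ℝ), ∃ v, J ε v ≤ η) :
    ∃ v : ℝ → α, Tendsto (fun ε => J ε (v ε)) (𝓝[>] 0) (𝓝 0) := by
  have hmin : ∀ ε : ℝ, ∃ v, 0 < ε → J ε v ≤ (⨅ v, J ε v) + ε := fun ε => by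
    obtain hε | hε := lt_or_ge 0 ε
    · obtain ⟨v, hv⟩ := exists_lt_of_ciInf_lt (lt_add_of_pos_right (⨅ v, J ε v) hε)
      exact ⟨v, fun _ => hv.le⟩
    · exact ⟨Classical.arbitrary α, fun h => absurd h hε.not_gt⟩
  choose v hv using hmin
  refine ⟨v, Metric.tendsto_nhds.2 fun η hη => ?_⟩
  filter_upwards [h (η / 3) (by positivity), eventually_mul_le 1 (by positivity : 0 < η / 3),
    self_mem_nhdsWithin] with ε ⟨v', hv'⟩ hεη (hε : 0 < ε)
  have hinf : ⨅ v, J ε v ≤ J ε v' := ciInf_le ⟨0, forall_mem_range.2 fun v => hJ ε v hε⟩ v'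
  rw [Real.dist_eq, sub_zero, abs_of_nonneg (hJ _ _ hε)]
  linarith [hv ε hε]

variable {P : Measure Ω} {τ : Zd d → Ω → Ω} {E0 : Finset (Zd d)} {V : Zd d → Ω → Rn n → ℝ}
  {ω : Ω} {u : Rd d → Rn n} {I : BoxIntegral.Box (Fin d)} {A : ℝ} {K : Set Ω} {b : Zd d}
  {κ p q C m : ℝ}

lemma AdmitsRecovery.eventually_exists_energy_near [Nontrivial (Rn n)]
    (h : AdmitsRecovery τ E0 V ω u I A) (hV : IsRandomPotential P E0 V) (hA : 0 ≤ A)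
    (hb : b ∈ E0) (hb0 : b ≠ 0) (hκ : 0 < κ) (hC : 0 ≤ C) (hq : 0 < q) (hqp : q ≤ p)
    (hlow : ∀ ω ∈ K, ∀ r, κ * ‖r‖ ^ p ≤ V b ω r + C)
    (hK : HasSpatialMean (fun z => K.indicator 1 (τ z ω)) m) (hm : m ≠ 0) {η : ℝ} (hη : 0 < η) :
    ∀ᶠ ε in 𝓝[>] (0 : ℝ), ∃ w : Zd d → Rn n,
      ε ^ d * ∑ z ∈ openLatticeBox ε I.lower I.upper, ‖ε • w z‖ ^ q ≤ η ∧
      |ε ^ d * latticeEnergy E0 (environment τ V ω) (fun z => rescale ε u z + w z)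
        (openLatticeBox ε I.lower I.upper) - A| ≤ η := by
  have hp : 0 < p := hq.trans_le hqp
  have hd : d ≠ 0 := by
    rintro rfl
    exact hb0 (Subsingleton.elim _ _)
  obtain ⟨C₀, hC₀⟩ := h (A + η) (lt_add_of_pos_right A hη)
  filter_upwards [hC₀, hK.eventually_exists_mem_openLatticeBox hm I.lower_lt_upper,
    (tendsto_recoveryError hd I hp hq κ C A ‖toRd b‖ C₀).eventually_le_const hη,
    self_mem_nhdsWithin] with ε ⟨w, hw, hle⟩ ⟨z, hz, hzK⟩ herr (hε : 0 < ε)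
  have hmono := Finset.sum_le_sum_of_subset_of_nonneg (openLatticeBox_subset ε I.lower I.upper)
    fun x _ _ => Finset.sum_nonneg fun b hb =>
      hV.nonneg b hb (τ x ω) (diffQuot (fun x => rescale ε u x + w x) x b)
  obtain ⟨w', herr', hnear⟩ := exists_scaled_latticeEnergy_near
    (fun x b hb => hV.continuous b hb (τ x ω)) (fun x b hb => hV.nonneg b hb (τ x ω)) hz hb hb0 hκ
    hp hC hA (hlow _ (mem_of_indicator_ne_zero hzK)) hw.norm_le hε hη.le hq.le hqp
    ((mul_le_mul_of_nonneg_left hmono (by positivity)).trans hle)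
  refine ⟨w', (herr'.trans ?_).trans herr, hnear⟩
  exact recoveryError_mono (Finset.card_le_card (openLatticeBox_subset _ _ _))
    ((norm_nonneg _).trans (hw.norm_le z)) hε.le

lemma AdmitsRecovery.exists_tendsto_energyE [Nontrivial (Rn n)]
    (h : AdmitsRecovery τ E0 V ω u I A) (hV : IsRandomPotential P E0 V) (hA : 0 ≤ A)
    (hb : b ∈ E0) (hb0 : b ≠ 0) (hκ : 0 < κ) (hC : 0 ≤ C) (hq : 0 < q) (hqp : q ≤ p)
    (hlow : ∀ ω ∈ K, ∀ r, κ * ‖r‖ ^ p ≤ V b ω r + C)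
    (hK : HasSpatialMean (fun z => K.indicator 1 (τ z ω)) m) (hm : m ≠ 0) :
    ∃ uε : ℝ → Zd d → Rn n,
      Tendsto (fun ε : ℝ => ε ^ d * ∑' z : Zd d, if ε • toRd z ∈ openBox I.lower I.upper then
        ‖uε ε z - u (ε • toRd z)‖ ^ q else 0) (𝓝[>] 0) (𝓝 0) ∧
      Tendsto (fun ε : ℝ => energyE τ E0 V ε ω (uε ε) (openBox I.lower I.upper)) (𝓝[>] 0)
        (𝓝 A) := by
  set B := fun ε : ℝ => openLatticeBox ε I.lower I.upper
  set dev : ℝ → (Zd d → Rn n) → ℝ := fun ε w => ε ^ d * ∑ z ∈ B ε, ‖ε • w z‖ ^ q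
  set err : ℝ → (Zd d → Rn n) → ℝ := fun ε w => |ε ^ d * latticeEnergy E0 (environment τ V ω)
    (fun z => rescale ε u z + w z) (B ε) - A|
  have hdev : ∀ ε w, 0 < ε → 0 ≤ dev ε w := fun ε w hε => by positivity
  have herr : ∀ ε w, 0 ≤ err ε w := fun ε w => abs_nonneg _
  obtain ⟨w, hw⟩ := exists_tendsto_zero_of_forall_eventually_exists_le
    (J := fun ε w => dev ε w + err ε w) (fun ε w hε => add_nonneg (hdev ε w hε) (herr ε w))
    fun η hη => by
      filter_upwards [h.eventually_exists_energy_near hV hA hb hb0 hκ hC hq hqp hlow hK hm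
        (half_pos hη)] with ε ⟨w, hwdev, hwerr⟩
      exact ⟨w, (add_le_add hwdev hwerr).trans_eq (add_halves η)⟩
  have hpos : ∀ᶠ ε in 𝓝[>] (0 : ℝ), 0 < ε := self_mem_nhdsWithin
  refine ⟨fun ε z => ε • (rescale ε u z + w ε z), ?_, ?_⟩
  · have hlim : Tendsto (fun ε => dev ε (w ε)) (𝓝[>] 0) (𝓝 0) := squeeze_zero'
      (hpos.mono fun ε hε => hdev ε _ hε)
      (.of_forall fun ε => le_add_of_nonneg_right (herr ε _)) hw
    refine hlim.congr' (hpos.mono fun ε hε => ?_)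
    simp only [dev, B, tsum_ite_mem_openBox hε, smul_add, smul_rescale hε.ne', add_sub_cancel_left]
  · have hlim : Tendsto (fun ε => err ε (w ε)) (𝓝[>] 0) (𝓝 0) := squeeze_zero'
      (.of_forall fun ε => herr ε _)
      (hpos.mono fun ε hε => le_add_of_nonneg_left (hdev ε _ hε)) hw
    refine (tendsto_iff_dist_tendsto_zero.2 hlim).congr' (hpos.mono fun ε hε => ?_)
    exact (energyE_smul hε ..).symm

end Recovery

section MainTheorem

lemma toLp_mem_closure_openBox {a b x : Fin d → ℝ} (hab : ∀ i, a i < b i) (hx : x ∈ Set.Icc a b) :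
    WithLp.toLp 2 x ∈ closure (openBox a b) := by
  have hclosure : x ∈ closure (Set.univ.pi fun i => Set.Ioo (a i) (b i)) := by
    simp only [closure_pi_set, closure_Ioo (hab _).ne]
    exact fun i _ => ⟨hx.1 i, hx.2 i⟩
  exact map_mem_closure (PiLp.continuous_toLp 2 _) hclosure fun y hy i => hy i (Set.mem_univ i)

lemma openBox_eq_empty {a b : Fin d → ℝ} {i : Fin d} (hi : b i ≤ a i) : openBox a b = ∅ :=
  Set.eq_empty_of_forall_notMem fun _ hx => ((hx i).1.trans (hx i).2).not_ge hi

lemma setIntegral_openBox (I : BoxIntegral.Box (Fin d)) (g : Rd d → ℝ) :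
    ∫ x in openBox I.lower I.upper, g x = ∫ x in BoxIntegral.Box.Icc I, g (WithLp.toLp 2 x) := by
  rw [← setIntegral_congr_set (BoxIntegral.Box.Ioo_ae_eq_Icc I),
    ← (PiLp.volume_preserving_toLp (Fin d)).setIntegral_preimage_emb
      (MeasurableEquiv.toLp 2 (Fin d → ℝ)).measurableEmbedding g (openBox I.lower I.upper)]
  congr 2
  ext x
  exact ⟨fun h i _ => h i, fun h i => h i (Set.mem_univ i)⟩

theorem gamma_limsup_general [Nontrivial (Rn n)] {P : Measure Ω} [IsProbabilityMeasure P]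
    {τ : Zd d → Ω → Ω} (hτ : IsErgodicAction P τ) {E0 : Finset (Zd d)} (hE0 : 0 ∉ E0)
    {V : Zd d → Ω → Rn n → ℝ} (hV : IsRandomPotential P E0 V) {b₀ : Zd d} (hb₀ : b₀ ∈ E0)
    {K : Set Ω} (hK : MeasurableSet K) (hPK : P K ≠ 0) {κ p q C : ℝ} (hκ : 0 < κ) (hC : 0 ≤ C)
    (hq : 0 < q) (hqp : q ≤ p) (hlow : ∀ ω ∈ K, ∀ r, κ * ‖r‖ ^ p ≤ V b₀ ω r + C) :
    ∀ᵐ ω ∂P, ∀ (a b : Fin d → ℝ) (u : Rd d → Rn n) (U : Set (Rd d)),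
      IsOpen U → closure (openBox a b) ⊆ U → ContDiffOn ℝ 1 u U →
      ∃ uε : ℝ → Zd d → Rn n,
        Tendsto (fun ε : ℝ => ε ^ d * ∑' z : Zd d,
            if ε • toRd z ∈ openBox a b then ‖uε ε z - u (ε • toRd z)‖ ^ q else 0)
          (𝓝[>] (0 : ℝ)) (𝓝 0) ∧
        Tendsto (fun ε : ℝ => energyE τ E0 V ε ω (uε ε) (openBox a b))
          (𝓝[>] (0 : ℝ)) (𝓝 (∫ x in openBox a b, W0 P τ E0 V (fderiv ℝ u x))) := by
  obtain ⟨D, hDc, hD⟩ := TopologicalSpace.exists_countable_dense (Rd d →L[ℝ] Rn n)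
  have hKm : ∫ ω, K.indicator (1 : Ω → ℝ) ω ∂P ≠ 0 := by
    rwa [integral_indicator_one hK, Ne, measureReal_eq_zero_iff]
  filter_upwards [hτ.ae_isTypical hV hDc, hτ.hasErgodicMean
    ((integrable_const (1 : ℝ)).indicator hK)] with ω hω hωK a b u U hU hab hu
  obtain hlt | ⟨i, hi⟩ := (em (∀ i, a i < b i)).imp_right not_forall.1
  · set I : BoxIntegral.Box (Fin d) := ⟨a, b, hlt⟩
    have hrec := hω.admitsRecovery hV hτ.toIsMeasurePreservingAction hD hE0 (I := I) fun x hx =>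
      hu.contDiffAt (hU.mem_nhds (hab (toLp_mem_closure_openBox hlt hx)))
    rw [← setIntegral_openBox I fun x => W0 P τ E0 V (fderiv ℝ u x)] at hrec
    exact hrec.exists_tendsto_energyE hV (integral_nonneg fun _ => hV.W0_nonneg _) hb₀
      (ne_of_mem_of_not_mem hb₀ hE0) hκ hC hq hqp hlow hωK hKm
  · exact ⟨0, by simp [openBox_eq_empty (not_lt.1 hi)],
      by simp [openBox_eq_empty (not_lt.1 hi), energyE]⟩

lemma integrable_of_lintegral_rpow_lt_top {P : Measure Ω} [IsFiniteMeasure P] {f : Ω → ℝ}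
    (hf : Measurable f) (hf0 : ∀ ω, 0 ≤ f ω) {α : ℝ} (hα : 1 ≤ α)
    (h : ∫⁻ ω, ENNReal.ofReal (f ω ^ α) ∂P < ⊤) : Integrable f P := by
  have hint : Integrable (fun ω => f ω ^ α) P := by
    refine ⟨(hf.pow_const α).aestronglyMeasurable, ?_⟩
    rwa [hasFiniteIntegral_iff_ofReal (.of_forall fun ω => Real.rpow_nonneg (hf0 ω) α)]
  refine ((integrable_const 1).add hint).mono' hf.aestronglyMeasurable (.of_forall fun ω => ?_)
  rw [Real.norm_of_nonneg (hf0 ω)]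
  simpa using rpow_le_one_add_rpow (hf0 ω) zero_le_one hα

lemma ae_pos_of_lintegral_rpow_neg_lt_top {P : Measure Ω} {f : Ω → ℝ} (hf : Measurable f) {β : ℝ}
    (hβ : 0 < β) (h : ∫⁻ ω, ENNReal.ofReal (f ω) ^ (-β) ∂P < ⊤) : ∀ᵐ ω ∂P, 0 < f ω := by
  filter_upwards [ae_lt_top (hf.ennreal_ofReal.pow_const (-β)) h.ne] with ω hω
  by_contra hc
  rw [ENNReal.ofReal_of_nonpos (not_lt.1 hc), ENNReal.zero_rpow_of_neg (neg_lt_zero.2 hβ)] at hω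
  exact lt_irrefl _ hω

lemma exists_pos_measure_le_ne_zero {P : Measure Ω} [NeZero P] {f : Ω → ℝ}
    (hf : ∀ᵐ ω ∂P, 0 < f ω) : ∃ κ > 0, P {ω | κ ≤ f ω} ≠ 0 := by
  by_contra! h
  have hsmall : ∀ᵐ ω ∂P, ∀ N : ℕ, f ω < 1 / ((N : ℝ) + 1) := ae_all_iff.2 fun N => by
    simpa [ae_iff] using h (1 / ((N : ℝ) + 1)) (by positivity)
  obtain ⟨ω, hω, hω'⟩ := (hf.and hsmall).exists
  obtain ⟨N, hN⟩ := exists_nat_one_div_lt hω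
  exact (hω' N).not_gt hN

variable {P : Measure Ω} {E0 : Finset (Zd d)} {V : Zd d → Ω → Rn n → ℝ} {lam : Zd d → Ω → ℝ}
  {p c₁ : ℝ}

lemma IsRandomPotential.of_growth [IsFiniteMeasure P]
    (hVmeas : ∀ b ∈ E0, Measurable fun q : Ω × Rn n => V b q.1 q.2)
    (hVcont : ∀ b ∈ E0, ∀ ω, Continuous (V b ω)) (hVnn : ∀ b ∈ E0, ∀ ω r, 0 ≤ V b ω r)
    (hlam : ∀ b ∈ E0, Integrable (lam b) P) (hlam0 : ∀ b ∈ E0, ∀ ω, 0 ≤ lam b ω) (hp : 0 ≤ p)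
    (hc₁ : 0 ≤ c₁) (hup : ∀ b ∈ E0, ∀ ω r, V b ω r ≤ c₁ * (1 + lam b ω * (‖r‖ ^ p + 1))) :
    IsRandomPotential P E0 V where
  measurable := hVmeas
  continuous := hVcont
  nonneg := hVnn
  exists_integrable_bound M := by
    refine ⟨fun ω => ∑ b ∈ E0, c₁ * (1 + lam b ω * (|M| ^ p + 1)),
      integrable_finsetSum _ fun b hb =>
        ((integrable_const 1).add ((hlam b hb).mul_const _)).const_mul c₁, fun b hb ω r hr => ?_⟩
    have hterm : ∀ b ∈ E0, 0 ≤ c₁ * (1 + lam b ω * (|M| ^ p + 1)) := fun b hb => by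
      have := hlam0 b hb ω
      positivity
    refine le_trans ?_ (Finset.single_le_sum hterm hb)
    have := hlam0 b hb ω
    refine (hup b hb ω r).trans ?_
    gcongr
    exact hr.trans (le_abs_self M)

lemma div_mul_le_add_of_mul_sub_le {κ l x c v : ℝ} (hκ : 0 ≤ κ) (hκl : κ ≤ l) (hv : 0 ≤ v)
    (h : l * (x / c - c) ≤ v) : κ / c * x ≤ v + κ * c := by
  rw [div_mul_eq_mul_div, ← mul_div_assoc']
  obtain hx | hx := le_total c (x / c)
  · linarith [mul_le_mul_of_nonneg_right hκl (sub_nonneg.2 hx)]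
  · linarith [mul_le_mul_of_nonneg_left hx hκ]

end MainTheorem

/-- existence of recovery sequences, discrete form of Proposition 3.11,
for `C¹` limits. -/
theorem gamma_limsup
    {d n : ℕ} (hd : 2 ≤ d) (hn : 1 ≤ n)
    {Ω : Type*} [MeasurableSpace Ω] (P : Measure Ω) [IsProbabilityMeasure P]
    (τ : Zd d → Ω → Ω) (hτ0 : τ 0 = id)
    (hτadd : ∀ x y : Zd d, τ (x + y) = τ x ∘ τ y)
    (hτmp : ∀ z : Zd d, MeasurePreserving (τ z) P P)
    (hτerg : ∀ B : Set Ω, MeasurableSet B → (∀ z : Zd d, τ z ⁻¹' B = B) → P B = 0 ∨ P B = 1)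
    (E0 : Finset (Zd d)) (hE00 : (0 : Zd d) ∉ E0) (hE0b : ∀ i : Fin d, stdb i ∈ E0)
    (p c₁ : ℝ) (hp : 1 < p) (hc₁ : 0 < c₁)
    (V : Zd d → Ω → Rn n → ℝ)
    (hVmeas : ∀ b ∈ E0, Measurable fun q : Ω × Rn n => V b q.1 q.2)
    (hVcont : ∀ b ∈ E0, ∀ ω : Ω, Continuous (V b ω))
    (hVnn : ∀ b ∈ E0, ∀ (ω : Ω) (r : Rn n), 0 ≤ V b ω r)
    (lam : Zd d → Ω → ℝ)
    (hlammeas : ∀ b ∈ E0, Measurable (lam b))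
    (hlamnn : ∀ b ∈ E0, ∀ ω : Ω, 0 ≤ lam b ω)
    (hgrowth : ∀ b ∈ E0, ∀ (ω : Ω) (r : Rn n),
      lam b ω * (‖r‖ ^ p / c₁ - c₁) ≤ V b ω r ∧ V b ω r ≤ c₁ * (1 + lam b ω * (‖r‖ ^ p + 1)))
    (α β : ℝ) (hα : 1 ≤ α) (hβ : 1 / (p - 1) ≤ β)
    (hmomα : ∀ b ∈ E0, ∫⁻ ω, ENNReal.ofReal (lam b ω ^ α) ∂P < ⊤)
    (hmomβ : ∀ i : Fin d, ∫⁻ ω, ENNReal.ofReal (lam (stdb i) ω) ^ (-β) ∂P < ⊤)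
    (h2T : (1 < α ∧ 1 / α + 1 / β ≤ p / (d : ℝ)) ∨
      (n = 1 ∧ ∃ q c₂ : ℝ, 1 < q ∧ q < p ∧ ∃ f : Zd d → Ω → Rn n → ℝ,
        ∀ b ∈ E0, ∀ ω : Ω,
          (∀ r : Rn n, 0 ≤ f b ω r) ∧
          ConvexOn ℝ Set.univ (fun r : Rn n => V b ω r + f b ω r) ∧
          (∀ r : Rn n, f b ω r ≤ c₂ * (1 + lam b ω * (‖r‖ ^ q + 1)))))
    : ∃ Ω₁ : Set Ω, MeasurableSet Ω₁ ∧ P Ω₁ = 1 ∧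
      ∀ ω ∈ Ω₁, ∀ a b : Fin d → ℝ, ∀ u : Rd d → Rn n, ∀ U : Set (Rd d),
        IsOpen U → closure (openBox a b) ⊆ U → ContDiffOn ℝ 1 u U →
        ∃ uε : ℝ → Zd d → Rn n,
          Tendsto (fun ε : ℝ => ε ^ d * ∑' z : Zd d,
              if ε • toRd z ∈ openBox a b then
                ‖uε ε z - u (ε • toRd z)‖ ^ (p * β / (β + 1)) else 0)
            (𝓝[>] (0 : ℝ)) (𝓝 0) ∧
          Tendsto (fun ε : ℝ => energyE τ E0 V ε ω (uε ε) (openBox a b))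
            (𝓝[>] (0 : ℝ)) (𝓝 (∫ x in openBox a b, W0 P τ E0 V (fderiv ℝ u x))) := by
  have hp0 : 0 < p := one_pos.trans hp
  have hβ0 : 0 < β := (one_div_pos.2 (sub_pos.2 hp)).trans_le hβ
  set e₀ : Zd d := stdb ⟨0, by lia⟩
  have he₀ : e₀ ∈ E0 := hE0b _
  have : Nonempty (Fin n) := ⟨⟨0, hn⟩⟩
  have hV : IsRandomPotential P E0 V := .of_growth hVmeas hVcont hVnn
    (fun b hb => integrable_of_lintegral_rpow_lt_top (hlammeas b hb) (hlamnn b hb) hα (hmomα b hb))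
    hlamnn hp0.le hc₁.le fun b hb ω r => (hgrowth b hb ω r).2
  obtain ⟨κ, hκ, hκP⟩ := exists_pos_measure_le_ne_zero
    (ae_pos_of_lintegral_rpow_neg_lt_top (hlammeas e₀ he₀) hβ0 (hmomβ _))
  have hlow : ∀ ω ∈ {ω | κ ≤ lam e₀ ω}, ∀ r, κ / c₁ * ‖r‖ ^ p ≤ V e₀ ω r + κ * c₁ :=
    fun ω hω r => div_mul_le_add_of_mul_sub_le hκ.le hω (hVnn e₀ he₀ ω r) (hgrowth e₀ he₀ ω r).1
  have hexp : p * β / (β + 1) ≤ p := by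
    rw [div_le_iff₀ (by positivity)]
    linarith
  have hae := gamma_limsup_general ⟨⟨hτ0, hτadd, hτmp⟩, hτerg⟩ hE00 hV he₀
    (measurableSet_le measurable_const (hlammeas e₀ he₀)) hκP (div_pos hκ hc₁)
    (mul_pos hκ hc₁).le (by positivity) hexp hlow
  obtain ⟨Ω₁, hΩ₁, hΩ₁m, hrec⟩ := hae.exists_measurable_mem
  exact ⟨Ω₁, hΩ₁m, (mem_ae_iff_prob_eq_one hΩ₁m).1 hΩ₁, hrec⟩

end StochHom
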